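/- arXiv:2509.03478 — 7 statements merged into one kernel-verified Lean document; each statement's English description precedes it below -/
import Mathlib

section
/- There exists a constant C > 0 depending only on r0, m0 and δ such that for every integer ℓ ≥ 1 and every function f belonging to H²_δ ∩ C²_δ one has ‖f''‖²_{L²_{δ-2}} + (1+ℓ(ℓ+1))·‖f'‖²_{L²_{δ-1}} + (1+ℓ(ℓ+1))²·‖f‖²_{L²_δ} ≤ C·( ‖L_ℓ f‖²_{L²_{δ-2}} + (1+ℓ(ℓ+1))^{1/2}·( f'(r0) − (2/r0)·f(r0) )² ). -/
/-!
Write `s = -2δ - 1 ∈ (0, 1)`, `ρ = r (r - 2 m0)` and `lam = ℓ(ℓ+1) ≥ 2`. Then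
`ρ · L_ℓ f = (ρ f')' - lam · f`, and the proof is a weighted energy estimate. The function
`G = r^s (ρ f f' - (s/2) (r - 2 m0) f²)` satisfies
`G' = r^s (ρ f L_ℓ f + lam f² + ρ f'² - (s/2) f² - (s²/2) (1 - 2 m0 / r) f²)`,
and `G` vanishes at infinity because `G / r` and `G'` are integrable. Since `s (s+1) / 2 ≤ 1 ≤ lam / 2`
the zeroth-order terms stay coercive. At `r0`, replacing `f'` by `b + (2 / r0) f`, where `b` is the
boundary datum, produces a term `(s/2 - 2) f(r0)²` of favourable sign, plus the cross term
`f(r0) b`. The latter is absorbed with the trace inequality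
`r0^(s+1) f(r0)² ≤ √lam ∫ r^s f² + (1/√lam) ∫ r^(s+2) f'²`, which is where the power
`lam^(1/2)` in front of `b²` comes from. Finally `f''` is recovered from the equation.
-/

open Set MeasureTheory
open scoped ENNReal

/-- Squared weighted L² norm: `‖f‖²_{L²_μ} = ∫_{r0}^∞ r^{-2μ-1} f(r)² dr`. -/
noncomputable def wL2 (r0 μ : ℝ) (f : ℝ → ℝ) : ℝ≥0∞ :=
  ∫⁻ r in Set.Ioi r0, ENNReal.ofReal (r ^ (-2*μ-1) * (f r)^2)

/-- Squared weighted C⁰ norm: `‖f‖²_{C⁰_μ} = sup_{r ≥ r0} r^{-2μ} f(r)²`. -/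
noncomputable def wC0 (r0 μ : ℝ) (f : ℝ → ℝ) : ℝ≥0∞ :=
  ⨆ r ∈ Set.Ici r0, ENNReal.ofReal (r ^ (-2*μ) * (f r)^2)

/-- First derivative on `[r0, ∞)`. -/
noncomputable def d1 (r0 : ℝ) (f : ℝ → ℝ) : ℝ → ℝ :=
  fun r => derivWithin f (Set.Ici r0) r

/-- Second derivative on `[r0, ∞)`. -/
noncomputable def d2 (r0 : ℝ) (f : ℝ → ℝ) : ℝ → ℝ := d1 r0 (d1 r0 f)

/-- `f` belongs to `H²_δ ∩ C²_δ`. -/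
def MemH2C2 (r0 δ : ℝ) (f : ℝ → ℝ) : Prop :=
  ContDiffOn ℝ 2 f (Set.Ici r0) ∧
  wL2 r0 δ f ≠ ⊤ ∧ wL2 r0 (δ-1) (d1 r0 f) ≠ ⊤ ∧ wL2 r0 (δ-2) (d2 r0 f) ≠ ⊤ ∧
  wC0 r0 δ f ≠ ⊤ ∧ wC0 r0 (δ-1) (d1 r0 f) ≠ ⊤ ∧ wC0 r0 (δ-2) (d2 r0 f) ≠ ⊤

/-- The operator `L_ℓ`. -/
noncomputable def Lop (r0 m0 : ℝ) (l : ℤ) (f : ℝ → ℝ) : ℝ → ℝ :=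
  fun r => d2 r0 f r + (2*(r - m0)/(r*(r - 2*m0))) * d1 r0 f r
    - ((l : ℝ)*((l : ℝ)+1)/(r*(r - 2*m0))) * f r

/-! ### Integration by parts on a half-line -/

/-- The boundary term at infinity vanishes: an integrable derivative gives a limit, and a nonzero
limit would make `F / r` comparable to `1 / r`, which is not integrable. -/
lemma integral_deriv_Ioi_eq_neg {a : ℝ} {F F' : ℝ → ℝ}
    (hc : ContinuousWithinAt F (Ici a) a) (hd : ∀ x ∈ Ioi a, HasDerivAt F (F' x) x)
    (hF' : IntegrableOn F' (Ioi a)) (hF : IntegrableOn (fun x => F x / x) (Ioi a)) :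
    ∫ x in Ioi a, F' x = - F a := by
  obtain ⟨L, hL⟩ : ∃ L, Filter.Tendsto F Filter.atTop (nhds L) :=
    ⟨_, tendsto_limUnder_of_hasDerivAt_of_integrableOn_Ioi hd hF'⟩
  have hL0 : L = 0 := by
    by_contra hne
    have hpos : 0 < |L| := abs_pos.mpr hne
    have hev : ∀ᶠ x in Filter.atTop, |L| / 2 < |F x| :=
      hL.abs.eventually (lt_mem_nhds (by linarith))
    obtain ⟨R, hR⟩ := Filter.eventually_atTop.mp hev
    set R' := max (max R a) 1
    refine not_integrableOn_Ioi_inv (a := R') ?_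
    have h1 : IntegrableOn (fun x => F x / x) (Ioi R') :=
      hF.mono_set (Ioi_subset_Ioi ((le_max_right _ _).trans (le_max_left _ _)))
    refine Integrable.mono' (h1.norm.const_mul (2 / |L|))
      measurable_inv.aestronglyMeasurable ?_
    refine (ae_restrict_iff' measurableSet_Ioi).mpr (Filter.Eventually.of_forall fun x hx => ?_)
    have hx1 : 1 < x := lt_of_le_of_lt (le_max_right _ _) hx
    have hxR : R ≤ x := (((le_max_left _ _).trans (le_max_left _ _)).trans_lt hx).le
    have hx0 : 0 < x := by linarith
    rw [Real.norm_eq_abs, Real.norm_eq_abs, abs_div, abs_inv, abs_of_pos hx0]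
    have := hR x hxR
    rw [inv_eq_one_div, div_mul_div_comm, div_le_div_iff₀ hx0 (by positivity)]
    nlinarith
  subst hL0
  have := integral_Ioi_of_hasDerivAt_of_tendsto hc hd hF' hL
  simpa using this

lemma integrableOn_of_le {r0 : ℝ} {g F : ℝ → ℝ} (hF : IntegrableOn F (Ioi r0))
    (hg : ContinuousOn g (Ioi r0)) (h : ∀ r ∈ Ioi r0, |g r| ≤ F r) :
    IntegrableOn g (Ioi r0) :=
  Integrable.mono' hF (hg.aestronglyMeasurable measurableSet_Ioi)
    ((ae_restrict_iff' measurableSet_Ioi).mpr (Filter.Eventually.of_forall h))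

/-! ### Trace and energy inequalities -/

/-- Trace inequality: `t` is a free parameter balancing `f` against its derivative `u`. -/
lemma trace_ineq {r0 s t : ℝ} (hr0 : 0 < r0) (hs0 : 0 < s) (hs1 : s < 1) (ht : 0 < t)
    {f u : ℝ → ℝ} (hf : ContinuousOn f (Ici r0)) (hu : ContinuousOn u (Ici r0))
    (hfd : ∀ r ∈ Ioi r0, HasDerivAt f (u r) r)
    (hA : IntegrableOn (fun r => r ^ s * f r ^ 2) (Ioi r0))
    (hB : IntegrableOn (fun r => r ^ s * r ^ 2 * u r ^ 2) (Ioi r0)) :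
    r0 ^ s * r0 * f r0 ^ 2 ≤ t * (∫ r in Ioi r0, r ^ s * f r ^ 2)
      + (∫ r in Ioi r0, r ^ s * r ^ 2 * u r ^ 2) / t := by
  have hpos : ∀ r ∈ Ioi r0, 0 < r := fun r hr => hr0.trans hr
  have hwc : ContinuousOn (fun r : ℝ => r ^ s) (Ici r0) := fun r hr =>
    (Real.continuousAt_rpow_const r s (Or.inr hs0.le)).continuousWithinAt
  have hfo := hf.mono Ioi_subset_Ici_self
  have huo := hu.mono Ioi_subset_Ici_self
  have hwo := hwc.mono Ioi_subset_Ici_self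
  set K' : ℝ → ℝ := fun r => r ^ s * ((s + 1) * f r ^ 2 + 2 * r * f r * u r) with hK'
  have hd : ∀ r ∈ Ioi r0, HasDerivAt (fun r => r ^ s * r * f r ^ 2) (K' r) r := by
    intro r hr
    have h0 := hpos r hr
    have h1 := Real.hasDerivAt_rpow_const (x := r) (p := s) (Or.inl h0.ne')
    refine ((h1.mul (hasDerivAt_id r)).mul ((hfd r hr).pow 2)).congr_deriv ?_
    simp only [hK', id, Pi.mul_apply, Pi.pow_apply]
    rw [Real.rpow_sub_one h0.ne']
    field_simp
    ring
  have hK'i : IntegrableOn K' (Ioi r0) := by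
    refine integrableOn_of_le ((hA.const_mul 3).add hB) (by fun_prop) fun r hr => ?_
    have h0 := hpos r hr
    have hw : 0 < r ^ s := Real.rpow_pos_of_pos h0 s
    have : |(s + 1) * f r ^ 2 + 2 * r * f r * u r| ≤ 3 * f r ^ 2 + r ^ 2 * u r ^ 2 := by
      rw [abs_le]
      constructor <;> nlinarith [sq_nonneg (f r + r * u r), sq_nonneg (f r - r * u r),
        mul_nonneg hs0.le (sq_nonneg (f r)), mul_nonneg (sub_nonneg.mpr hs1.le) (sq_nonneg (f r))]
    simp only [hK', abs_mul, abs_of_pos hw, Pi.add_apply]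
    calc _ ≤ r ^ s * (3 * f r ^ 2 + r ^ 2 * u r ^ 2) := by gcongr
      _ = _ := by ring
  have hKi : IntegrableOn (fun r => r ^ s * r * f r ^ 2 / r) (Ioi r0) := by
    refine hA.congr_fun (fun r hr => ?_) measurableSet_Ioi
    have h0 := hpos r hr
    field_simp
  have hcont : ContinuousWithinAt (fun r => r ^ s * r * f r ^ 2) (Ici r0) r0 := by
    have : ContinuousOn (fun r => r ^ s * r * f r ^ 2) (Ici r0) := by fun_prop
    exact this r0 self_mem_Ici
  have hint := integral_deriv_Ioi_eq_neg hcont hd hK'i hKi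
  have hle : ∫ r in Ioi r0, - K' r
      ≤ ∫ r in Ioi r0, (t * (r ^ s * f r ^ 2) + (r ^ s * r ^ 2 * u r ^ 2) * t⁻¹) := by
    refine setIntegral_mono_on hK'i.neg ((hA.const_mul t).add (hB.mul_const _))
      measurableSet_Ioi fun r hr => ?_
    have h0 := hpos r hr
    have hw : 0 < r ^ s := Real.rpow_pos_of_pos h0 s
    have key : -((s + 1) * f r ^ 2 + 2 * r * f r * u r)
        ≤ t * f r ^ 2 + r ^ 2 * u r ^ 2 * t⁻¹ := by
      have : t * f r ^ 2 + r ^ 2 * u r ^ 2 * t⁻¹ + 2 * r * f r * u r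
          = t⁻¹ * (t * f r + r * u r) ^ 2 := by field_simp; ring
      have h2 : 0 ≤ t⁻¹ * (t * f r + r * u r) ^ 2 := by positivity
      have h3 : 0 ≤ (s + 1) * f r ^ 2 := by positivity
      linarith
    calc - K' r = r ^ s * -((s + 1) * f r ^ 2 + 2 * r * f r * u r) := by simp only [hK']; ring
      _ ≤ r ^ s * (t * f r ^ 2 + r ^ 2 * u r ^ 2 * t⁻¹) := by gcongr
      _ = _ := by ring
  rw [integral_neg, hint, integral_add (hA.const_mul t) (hB.mul_const _), integral_const_mul,
    integral_mul_const] at hle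
  simp only [neg_neg] at hle
  rw [div_eq_mul_inv]
  exact hle

set_option maxHeartbeats 1000000 in
/-- Energy estimate. Here `u = f'`, `v = f''`, and `g = L f`, encoded by the equation cleared of
the denominator `ρ = r (r - 2 m)`. The boundary datum is `u r0 - (2 / r0) f r0`; the negative
`f(r0)²` term produced by its coefficient `2 / r0` is discarded. -/
lemma energy_ineq {m r0 s lam : ℝ} (hm : 0 < m) (hr : 2 * m < r0) (hs0 : 0 < s) (hs1 : s < 1)
    (hlam : 2 ≤ lam) {f u v g : ℝ → ℝ}
    (hf : ContinuousOn f (Ici r0)) (hu : ContinuousOn u (Ici r0)) (hv : ContinuousOn v (Ici r0))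
    (hfd : ∀ r ∈ Ioi r0, HasDerivAt f (u r) r) (hud : ∀ r ∈ Ioi r0, HasDerivAt u (v r) r)
    (hg : ∀ r ∈ Ioi r0, r * (r - 2 * m) * g r
      = r * (r - 2 * m) * v r + 2 * (r - m) * u r - lam * f r)
    (hA : IntegrableOn (fun r => r ^ s * f r ^ 2) (Ioi r0))
    (hB : IntegrableOn (fun r => r ^ s * r ^ 2 * u r ^ 2) (Ioi r0))
    (hN : IntegrableOn (fun r => r ^ s * r ^ 4 * g r ^ 2) (Ioi r0)) :
    (1 - 2 * m / r0) * (∫ r in Ioi r0, r ^ s * r ^ 2 * u r ^ 2)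
      + lam / 4 * (∫ r in Ioi r0, r ^ s * f r ^ 2)
    ≤ (∫ r in Ioi r0, r ^ s * r ^ 4 * g r ^ 2) / lam
      + (1 - 2 * m / r0) * (r0 ^ s * r0 ^ 2 * (|f r0| * |u r0 - 2 / r0 * f r0|)) := by
  have hr0 : 0 < r0 := by linarith
  have hpos : ∀ r ∈ Ioi r0, 0 < r := fun r hr => hr0.trans hr
  have hwc : ContinuousOn (fun r : ℝ => r ^ s) (Ici r0) := fun r hr =>
    (Real.continuousAt_rpow_const r s (Or.inr hs0.le)).continuousWithinAt
  have hfo := hf.mono Ioi_subset_Ici_self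
  have huo := hu.mono Ioi_subset_Ici_self
  have hvo := hv.mono Ioi_subset_Ici_self
  have hwo := hwc.mono Ioi_subset_Ici_self
  have hne : ∀ r ∈ Ioi r0, r ≠ 0 := fun r hr => (hpos r hr).ne'
  set G : ℝ → ℝ := fun r =>
    r ^ s * (r * (r - 2 * m) * f r * u r - s / 2 * (r - 2 * m) * f r ^ 2) with hG
  set G' : ℝ → ℝ := fun r =>
    r ^ s * (f r * (r * (r - 2 * m) * v r + 2 * (r - m) * u r) + r * (r - 2 * m) * u r ^ 2
      - s / 2 * f r ^ 2 - s ^ 2 / 2 * (1 - 2 * m / r) * f r ^ 2) with hG'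
  have hd : ∀ r ∈ Ioi r0, HasDerivAt G (G' r) r := by
    intro r hr
    have h0 := hpos r hr
    have h1 := Real.hasDerivAt_rpow_const (x := r) (p := s) (Or.inl h0.ne')
    have h2 : HasDerivAt (fun r => r - 2 * m) 1 r := (hasDerivAt_id r).sub_const _
    have h3 := h1.mul ((((hasDerivAt_id r).mul h2).mul (hfd r hr)).mul (hud r hr) |>.sub
      ((h2.const_mul (s / 2)).mul ((hfd r hr).pow 2)))
    refine h3.congr_deriv ?_
    simp only [hG', id, Pi.mul_apply, Pi.pow_apply, Pi.sub_apply]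
    rw [Real.rpow_sub_one h0.ne']
    field_simp
    ring
  -- Substituting the equation into `G'`.
  have hG'eq : ∀ r ∈ Ioi r0, G' r = r ^ s * (r * (r - 2 * m) * (f r * g r) + lam * f r ^ 2
      + r * (r - 2 * m) * u r ^ 2 - s / 2 * f r ^ 2
      - s ^ 2 / 2 * (1 - 2 * m / r) * f r ^ 2) := by
    intro r hr
    have := hg r hr
    simp only [hG']
    linear_combination (-(r ^ s) * f r) * this
  have hfac : ∀ r ∈ Ioi r0, 0 ≤ 1 - 2 * m / r ∧ 1 - 2 * m / r ≤ 1
      ∧ 1 - 2 * m / r0 ≤ 1 - 2 * m / r := by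
    intro r hr
    have h0 := hpos r hr
    have hr' : r0 < r := hr
    refine ⟨?_, ?_, ?_⟩
    · rw [sub_nonneg, div_le_one h0]; linarith
    · have : 0 < 2 * m / r := by positivity
      linarith
    · gcongr
  have hG'i : IntegrableOn G' (Ioi r0) := by
    have hcont : ContinuousOn G' (Ioi r0) := by
      simp only [hG']
      fun_prop (disch := assumption)
    refine integrableOn_of_le (((hA.const_mul (lam + 2)).add hB).add hN) hcont fun r hr => ?_
    have h0 := hpos r hr
    have hr' : r0 < r := hr
    have hw : 0 < r ^ s := Real.rpow_pos_of_pos h0 s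
    obtain ⟨hc0, hc1, -⟩ := hfac r hr
    rw [hG'eq r hr, abs_mul, abs_of_pos hw]
    have e1 : r * (r - 2 * m) = r ^ 2 * (1 - 2 * m / r) := by field_simp
    rw [e1]
    set c := 1 - 2 * m / r
    set P := r ^ 2 * g r with hP
    have a1 : |c * (f r * P)| ≤ f r ^ 2 + P ^ 2 := by
      rw [abs_mul, abs_of_nonneg hc0]
      have : |f r * P| ≤ f r ^ 2 + P ^ 2 := by
        rw [abs_le]
        constructor <;> nlinarith [sq_nonneg (f r + P), sq_nonneg (f r - P)]
      nlinarith [abs_nonneg (f r * P)]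
    have a2 : c * (r ^ 2 * u r ^ 2) ≤ r ^ 2 * u r ^ 2 := by
      have : 0 ≤ r ^ 2 * u r ^ 2 := by positivity
      nlinarith
    have a3 : 0 ≤ c * (r ^ 2 * u r ^ 2) := by positivity
    have a4 : s ^ 2 / 2 * c ≤ 1 / 2 := by nlinarith
    have a5 : s ^ 2 / 2 * c * f r ^ 2 ≤ 1 / 2 * f r ^ 2 := by gcongr
    have a6 : 0 ≤ s ^ 2 / 2 * c * f r ^ 2 := by positivity
    have a7 : s / 2 * f r ^ 2 ≤ 1 / 2 * f r ^ 2 := by gcongr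
    have a8 : 0 ≤ s / 2 * f r ^ 2 := by positivity
    have a9 : 0 ≤ lam * f r ^ 2 := by positivity
    have hb : |r ^ 2 * c * (f r * g r) + lam * f r ^ 2 + r ^ 2 * c * u r ^ 2 - s / 2 * f r ^ 2
        - s ^ 2 / 2 * c * f r ^ 2| ≤ (lam + 2) * f r ^ 2 + r ^ 2 * u r ^ 2 + P ^ 2 := by
      have e2 : r ^ 2 * c * (f r * g r) = c * (f r * P) := by rw [hP]; ring
      rw [e2]
      rw [abs_le] at a1 ⊢
      have := sq_nonneg P
      have := sq_nonneg (f r)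
      constructor <;> nlinarith
    simp only [Pi.add_apply]
    calc _ ≤ r ^ s * ((lam + 2) * f r ^ 2 + r ^ 2 * u r ^ 2 + P ^ 2) := by gcongr
      _ = _ := by rw [hP]; ring
  have hGi : IntegrableOn (fun r => G r / r) (Ioi r0) := by
    have hcont : ContinuousOn (fun r => G r / r) (Ioi r0) := by
      simp only [hG]
      fun_prop (disch := assumption)
    refine integrableOn_of_le (hA.add hB) hcont fun r hr => ?_
    have h0 := hpos r hr
    have hw : 0 < r ^ s := Real.rpow_pos_of_pos h0 s
    obtain ⟨hc0, hc1, -⟩ := hfac r hr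
    have e1 : G r / r = r ^ s * ((1 - 2 * m / r) * (f r * (r * u r) - s / 2 * f r ^ 2)) := by
      simp only [hG]; field_simp
    rw [e1, abs_mul, abs_of_pos hw, abs_mul, abs_of_nonneg hc0]
    have a1 : |f r * (r * u r) - s / 2 * f r ^ 2| ≤ f r ^ 2 + (r * u r) ^ 2 := by
      have a7 : s / 2 * f r ^ 2 ≤ 1 / 2 * f r ^ 2 := by gcongr
      have a8 : 0 ≤ s / 2 * f r ^ 2 := by positivity
      rw [abs_le]
      constructor <;> nlinarith [sq_nonneg (f r + r * u r), sq_nonneg (f r - r * u r)]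
    simp only [Pi.add_apply]
    calc _ ≤ r ^ s * (1 * (f r ^ 2 + (r * u r) ^ 2)) := by gcongr
      _ = _ := by ring
  have hcont : ContinuousWithinAt G (Ici r0) r0 := by
    have : ContinuousOn G (Ici r0) := by
      simp only [hG]
      fun_prop
    exact this r0 self_mem_Ici
  have hint := integral_deriv_Ioi_eq_neg hcont hd hG'i hGi
  have hle : ∫ r in Ioi r0, ((1 - 2 * m / r0) * (r ^ s * r ^ 2 * u r ^ 2)
        + lam / 4 * (r ^ s * f r ^ 2) - (r ^ s * r ^ 4 * g r ^ 2) * lam⁻¹)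
      ≤ ∫ r in Ioi r0, G' r := by
    refine setIntegral_mono_on (((hB.const_mul _).add (hA.const_mul _)).sub (hN.mul_const _))
      hG'i measurableSet_Ioi fun r hr => ?_
    have h0 := hpos r hr
    have hw : 0 < r ^ s := Real.rpow_pos_of_pos h0 s
    obtain ⟨hc0, hc1, hc2⟩ := hfac r hr
    rw [hG'eq r hr]
    have e1 : r * (r - 2 * m) = r ^ 2 * (1 - 2 * m / r) := by field_simp
    rw [e1]
    set c := 1 - 2 * m / r
    set c₀ := 1 - 2 * m / r0
    set P := r ^ 2 * g r with hP
    have a2 : c₀ * (r ^ 2 * u r ^ 2) ≤ c * (r ^ 2 * u r ^ 2) := by gcongr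
    have a4 : s ^ 2 / 2 * c ≤ 1 / 2 := by nlinarith
    have a5 : s ^ 2 / 2 * c * f r ^ 2 ≤ 1 / 2 * f r ^ 2 := by gcongr
    have a7 : s / 2 * f r ^ 2 ≤ 1 / 2 * f r ^ 2 := by gcongr
    have a9 : 2 * f r ^ 2 ≤ lam * f r ^ 2 := by gcongr
    -- Young's inequality with weight `lam`; `c ≤ 1` is used on the square of `P`.
    have a10 : 0 ≤ lam / 4 * f r ^ 2 + c * (f r * P) + P ^ 2 * lam⁻¹ := by
      have l0 : 0 < lam := by linarith
      have : lam / 4 * f r ^ 2 + c * (f r * P) + P ^ 2 * lam⁻¹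
          = lam⁻¹ * ((lam / 2 * f r + c * P) ^ 2 + (1 - c ^ 2) * P ^ 2) := by
        field_simp; ring
      rw [this]
      have : 0 ≤ 1 - c ^ 2 := by
        rw [show 1 - c ^ 2 = (1 - c) * (1 + c) by ring]
        exact mul_nonneg (by linarith) (by linarith)
      positivity
    have hb : c₀ * (r ^ 2 * u r ^ 2) + lam / 4 * f r ^ 2 - P ^ 2 * lam⁻¹
        ≤ r ^ 2 * c * (f r * g r) + lam * f r ^ 2 + r ^ 2 * c * u r ^ 2 - s / 2 * f r ^ 2
        - s ^ 2 / 2 * c * f r ^ 2 := by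
      have e2 : r ^ 2 * c * (f r * g r) = c * (f r * P) := by rw [hP]; ring
      rw [e2]
      linarith
    calc _ = r ^ s * (c₀ * (r ^ 2 * u r ^ 2) + lam / 4 * f r ^ 2 - P ^ 2 * lam⁻¹) := by
          rw [hP]; ring
      _ ≤ _ := by gcongr
  have hBA : IntegrableOn (fun r => (1 - 2 * m / r0) * (r ^ s * r ^ 2 * u r ^ 2)
      + lam / 4 * (r ^ s * f r ^ 2)) (Ioi r0) := (hB.const_mul (1 - 2 * m / r0)).add (hA.const_mul (lam / 4))
  rw [integral_sub hBA (hN.mul_const _), integral_add (hB.const_mul _) (hA.const_mul _),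
    integral_const_mul, integral_const_mul, integral_mul_const, hint] at hle
  have hbd : -G r0 ≤ (1 - 2 * m / r0) * (r0 ^ s * r0 ^ 2 *
      (|f r0| * |u r0 - 2 / r0 * f r0|)) := by
    have hw : 0 < r0 ^ s := Real.rpow_pos_of_pos hr0 s
    have hc : 0 ≤ 1 - 2 * m / r0 := by rw [sub_nonneg, div_le_one hr0]; linarith
    have e1 : -G r0 = (1 - 2 * m / r0) * (r0 ^ s * r0 ^ 2 *
        (-(f r0 * (u r0 - 2 / r0 * f r0)) - (2 - s / 2) * f r0 ^ 2 / r0)) := by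
      simp only [hG]; field_simp; ring
    rw [e1, ← abs_mul]
    have a1 := neg_abs_le (f r0 * (u r0 - 2 / r0 * f r0))
    have a2 : 0 ≤ (2 - s / 2) * f r0 ^ 2 / r0 := by
      have : 0 ≤ 2 - s / 2 := by linarith
      positivity
    gcongr
    linarith
  rw [← div_eq_mul_inv] at hle
  linarith

/-! ### Closing the estimate -/

/-- Absorption of the boundary term, for the numbers `A = ∫ r^s f²`, `B = ∫ r^(s+2) f'²`,
`N = ∫ r^(s+4) (L f)²`, `t = √lam`, `x = |f r0|`, `b` the absolute value of the boundary
datum and `W = r0^s`. -/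
lemma absorb {k A B N t x b W r0 : ℝ} (hk0 : 0 < k) (hk1 : k ≤ 1) (hA : 0 ≤ A) (hB : 0 ≤ B)
    (hN : 0 ≤ N) (ht : 0 < t) (hW : 0 < W) (hr0 : 0 < r0)
    (htr : W * r0 * x ^ 2 ≤ t * A + B / t)
    (hen : k * B + t ^ 2 / 4 * A ≤ N / t ^ 2 + k * (W * r0 ^ 2 * (x * b))) :
    t ^ 2 * B + t ^ 4 * A ≤ 8 / k * (1 + 2 * (W * r0 ^ 3)) * (N + t * b ^ 2) := by
  have h1 : W * r0 * x ^ 2 * t ^ 3 ≤ t ^ 4 * A + t ^ 2 * B := by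
    calc W * r0 * x ^ 2 * t ^ 3 ≤ (t * A + B / t) * t ^ 3 := by gcongr
      _ = _ := by field_simp
  have h2 : k * (t ^ 2 * B) + t ^ 4 * A / 4 ≤ N + k * (W * r0 ^ 2 * (x * b)) * t ^ 2 := by
    calc _ = (k * B + t ^ 2 / 4 * A) * t ^ 2 := by ring
      _ ≤ (N / t ^ 2 + k * (W * r0 ^ 2 * (x * b))) * t ^ 2 := by gcongr
      _ = _ := by field_simp
  have h3 : W * r0 ^ 2 * (x * b) * t ^ 2 ≤ W * r0 * x ^ 2 * t ^ 3 / 8 + 2 * (W * r0 ^ 3) * (t * b ^ 2) := by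
    have : 0 ≤ W * r0 * t * 2 * (t * x / 4 - r0 * b) ^ 2 := by positivity
    nlinarith
  have h4 : k * (W * r0 ^ 2 * (x * b) * t ^ 2)
      ≤ k * ((t ^ 4 * A + t ^ 2 * B) / 8 + 2 * (W * r0 ^ 3) * (t * b ^ 2)) := by
    gcongr
    linarith
  have hA4 : 0 ≤ t ^ 4 * A := by positivity
  have hB2 : 0 ≤ t ^ 2 * B := by positivity
  have hkA : k * (t ^ 4 * A) ≤ t ^ 4 * A := by nlinarith
  have hkB : 0 ≤ k * (t ^ 2 * B) := by positivity
  have hX : 0 ≤ 2 * (W * r0 ^ 3) * (t * b ^ 2) := by positivity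
  have hkX : k * (2 * (W * r0 ^ 3) * (t * b ^ 2)) ≤ 2 * (W * r0 ^ 3) * (t * b ^ 2) := by nlinarith
  have h5 : k * (t ^ 2 * B + t ^ 4 * A) ≤ 8 * (1 + 2 * (W * r0 ^ 3)) * (N + t * b ^ 2) := by
    have : 0 ≤ 2 * (W * r0 ^ 3) * N := by positivity
    have : 0 ≤ t * b ^ 2 := by positivity
    nlinarith
  rw [show 8 / k * (1 + 2 * (W * r0 ^ 3)) * (N + t * b ^ 2)
    = (8 * (1 + 2 * (W * r0 ^ 3)) * (N + t * b ^ 2)) / k by ring, le_div_iff₀ hk0]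
  linarith

/-- The second derivative is controlled pointwise through the equation. -/
lemma second_deriv_bound {k m r lam x y z g : ℝ} (hk0 : 0 < k) (hm : 0 < m) (hr : 2 * m < r)
    (hk : k ≤ 1 - 2 * m / r)
    (hg : r * (r - 2 * m) * g = r * (r - 2 * m) * z + 2 * (r - m) * y - lam * x) :
    r ^ 4 * z ^ 2 ≤ 3 * (r ^ 4 * g ^ 2) + 12 / k ^ 2 * (r ^ 2 * y ^ 2)
      + 3 / k ^ 2 * lam ^ 2 * x ^ 2 := by
  have h0 : 0 < r := by linarith
  set c := 1 - 2 * m / r with hc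
  have hc0 : 0 < c := hk0.trans_le hk
  have e1 : r * (r - 2 * m) = r ^ 2 * c := by rw [hc]; field_simp
  rw [e1] at hg
  have hz : r ^ 2 * z = r ^ 2 * g + (-(2 * (r - m) * y / c)) + lam * x / c := by
    field_simp
    linarith
  have h3 : ∀ p q w : ℝ, (p + q + w) ^ 2 ≤ 3 * p ^ 2 + 3 * q ^ 2 + 3 * w ^ 2 := fun p q w => by
    nlinarith [sq_nonneg (p - q), sq_nonneg (q - w), sq_nonneg (p - w)]
  have h4 : (2 * (r - m) * y / c) ^ 2 ≤ 4 / k ^ 2 * (r ^ 2 * y ^ 2) := by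
    have hrm : 0 ≤ r - m := by linarith
    calc (2 * (r - m) * y / c) ^ 2 = 4 / c ^ 2 * ((r - m) ^ 2 * y ^ 2) := by
          field_simp; ring
      _ ≤ 4 / k ^ 2 * (r ^ 2 * y ^ 2) := by gcongr; linarith
  have h5 : (lam * x / c) ^ 2 ≤ 1 / k ^ 2 * (lam ^ 2 * x ^ 2) := by
    calc (lam * x / c) ^ 2 = 1 / c ^ 2 * (lam ^ 2 * x ^ 2) := by field_simp
      _ ≤ _ := by gcongr
  calc r ^ 4 * z ^ 2 = (r ^ 2 * z) ^ 2 := by ring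
    _ ≤ 3 * (r ^ 2 * g) ^ 2 + 3 * (2 * (r - m) * y / c) ^ 2 + 3 * (lam * x / c) ^ 2 := by
        rw [hz]; simpa only [neg_sq] using h3 (r ^ 2 * g) (-(2 * (r - m) * y / c)) (lam * x / c)
    _ ≤ 3 * (r ^ 2 * g) ^ 2 + 3 * (4 / k ^ 2 * (r ^ 2 * y ^ 2))
        + 3 * (1 / k ^ 2 * (lam ^ 2 * x ^ 2)) := by gcongr
    _ = _ := by ring

/-! ### Passage from the weighted norms to Bochner integrals -/

/-- A finite weighted norm of a continuous function is a Bochner integral; the weight is rewritten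
as `r ^ s * r ^ n` so that the three norms in play share the factor `r ^ s`. -/
lemma wL2_eq {r0 μ s : ℝ} (n : ℕ) (hr0 : 0 < r0) (hμ : -2 * μ - 1 = s + n) (hs0 : 0 < s)
    {F : ℝ → ℝ} (hF : ContinuousOn F (Ioi r0)) (hfin : wL2 r0 μ F ≠ ⊤) :
    IntegrableOn (fun r => r ^ s * r ^ n * F r ^ 2) (Ioi r0) ∧
    wL2 r0 μ F = ENNReal.ofReal (∫ r in Ioi r0, r ^ s * r ^ n * F r ^ 2) := by
  have hwc : ContinuousOn (fun r : ℝ => r ^ s) (Ioi r0) := fun r hr =>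
    (Real.continuousAt_rpow_const r s (Or.inr hs0.le)).continuousWithinAt
  have e : wL2 r0 μ F = ∫⁻ r in Ioi r0, ENNReal.ofReal (r ^ s * r ^ n * F r ^ 2) := by
    unfold wL2
    refine setLIntegral_congr_fun measurableSet_Ioi fun r hr => ?_
    have h0 : 0 < r := hr0.trans hr
    rw [hμ, Real.rpow_add_natCast h0.ne']
  have hnn : 0 ≤ᵐ[volume.restrict (Ioi r0)] fun r => r ^ s * r ^ n * F r ^ 2 := by
    refine (ae_restrict_iff' measurableSet_Ioi).mpr (Filter.Eventually.of_forall fun r hr => ?_)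
    have h0 : 0 < r := hr0.trans hr
    simp only [Pi.zero_apply]
    positivity
  have hm : AEStronglyMeasurable (fun r => r ^ s * r ^ n * F r ^ 2)
      (volume.restrict (Ioi r0)) := by
    refine ContinuousOn.aestronglyMeasurable ?_ measurableSet_Ioi
    fun_prop
  have hi : IntegrableOn (fun r => r ^ s * r ^ n * F r ^ 2) (Ioi r0) :=
    (lintegral_ofReal_ne_top_iff_integrable hm hnn).mp (e ▸ hfin)
  exact ⟨hi, by rw [e, ofReal_integral_eq_lintegral_ofReal hi hnn]⟩

/-- The one-sided derivatives at `r0` are continuous up to the boundary and are ordinary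
derivatives in the interior. -/
lemma regularity {r0 : ℝ} {f : ℝ → ℝ} (h : ContDiffOn ℝ 2 f (Ici r0)) :
    ContinuousOn f (Ici r0) ∧ ContinuousOn (d1 r0 f) (Ici r0) ∧ ContinuousOn (d2 r0 f) (Ici r0) ∧
    (∀ r ∈ Ioi r0, HasDerivAt f (d1 r0 f r) r) ∧
    (∀ r ∈ Ioi r0, HasDerivAt (d1 r0 f) (d2 r0 f r) r) := by
  have hU := uniqueDiffOn_Ici r0
  have h1 : ContDiffOn ℝ 1 (d1 r0 f) (Ici r0) := h.derivWithin hU (by norm_num)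
  have h2 : ContDiffOn ℝ 0 (d2 r0 f) (Ici r0) := h1.derivWithin hU (by norm_num)
  refine ⟨h.continuousOn, h1.continuousOn, h2.continuousOn, fun r hr => ?_, fun r hr => ?_⟩
  · exact ((h.differentiableOn (by norm_num)) r (mem_Ici_of_Ioi hr)).hasDerivWithinAt.hasDerivAt
      (Ici_mem_nhds hr)
  · exact ((h1.differentiableOn (by norm_num)) r (mem_Ici_of_Ioi hr)).hasDerivWithinAt.hasDerivAt
      (Ici_mem_nhds hr)

/-! ### The weighted elliptic estimate -/

theorem stmt4 (m0 r0 δ : ℝ) (hm0 : 0 < m0) (hr0 : 2*m0 < r0)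
    (hδ1 : -1 < δ) (hδ2 : δ < -(1/2)) :
    ∃ C : ℝ, 0 < C ∧ ∀ (l : ℤ), 1 ≤ l → ∀ f : ℝ → ℝ, MemH2C2 r0 δ f →
      wL2 r0 (δ-2) (d2 r0 f)
        + ENNReal.ofReal (1 + (l:ℝ)*((l:ℝ)+1)) * wL2 r0 (δ-1) (d1 r0 f)
        + (ENNReal.ofReal (1 + (l:ℝ)*((l:ℝ)+1)))^2 * wL2 r0 δ f
      ≤ ENNReal.ofReal C *
        (wL2 r0 (δ-2) (Lop r0 m0 l f)
          + ENNReal.ofReal ((1 + (l:ℝ)*((l:ℝ)+1)) ^ ((1:ℝ)/2))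
            * ENNReal.ofReal ((d1 r0 f r0 - (2/r0) * f r0)^2)) := by
  obtain ⟨s, hs⟩ : ∃ s, s = -2 * δ - 1 := ⟨_, rfl⟩
  obtain ⟨k, hk⟩ : ∃ k, k = 1 - 2 * m0 / r0 := ⟨_, rfl⟩
  have hr : 0 < r0 := by linarith
  have hs0 : 0 < s := by linarith
  have hs1 : s < 1 := by linarith
  have hk0 : 0 < k := by rw [hk, sub_pos, div_lt_one hr]; exact hr0
  have hk1 : k ≤ 1 := by
    have : 0 < 2 * m0 / r0 := by positivity
    linarith
  have hW : 0 < r0 ^ s := Real.rpow_pos_of_pos hr s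
  obtain ⟨M, hM⟩ : ∃ M, M = 8 / k * (1 + 2 * (r0 ^ s * r0 ^ 3)) := ⟨_, rfl⟩
  have hM0 : 0 < M := by rw [hM]; positivity
  refine ⟨3 + (12 / k ^ 2 + 9 / 4) * M, by positivity, fun l hl f hmem => ?_⟩
  obtain ⟨hcd, hAf, hBf, hDf, -, -, -⟩ := hmem
  obtain ⟨cf, cu, cv, hfd, hud⟩ := regularity hcd
  obtain ⟨lam, hlam⟩ : ∃ lam : ℝ, lam = (l : ℝ) * ((l : ℝ) + 1) := ⟨_, rfl⟩
  have hlam2 : 2 ≤ lam := by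
    have : (1 : ℝ) ≤ l := by exact_mod_cast hl
    rw [hlam]; nlinarith
  rw [← hlam]
  by_cases hNf : wL2 r0 (δ - 2) (Lop r0 m0 l f) = ⊤
  · rw [hNf, top_add, ENNReal.mul_top]
    · exact le_top
    · simp only [ne_eq, ENNReal.ofReal_eq_zero, not_le]; positivity
  have cL : ContinuousOn (Lop r0 m0 l f) (Ioi r0) := by
    have hne : ∀ r ∈ Ioi r0, r * (r - 2 * m0) ≠ 0 := fun r hx => by
      have : r0 < r := hx
      exact mul_ne_zero (by linarith) (by linarith)
    have := cf.mono Ioi_subset_Ici_self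
    have := cu.mono Ioi_subset_Ici_self
    have := cv.mono Ioi_subset_Ici_self
    unfold Lop
    fun_prop (disch := assumption)
  have hg : ∀ r ∈ Ioi r0, r * (r - 2 * m0) * Lop r0 m0 l f r
      = r * (r - 2 * m0) * d2 r0 f r + 2 * (r - m0) * d1 r0 f r - lam * f r := by
    intro r hx
    have hx' : r0 < r := hx
    have h1 : r ≠ 0 := by linarith
    have h2 : r - 2 * m0 ≠ 0 := by linarith
    unfold Lop
    rw [hlam]
    field_simp
  obtain ⟨hA, eA⟩ := wL2_eq (s := s) 0 hr (by rw [hs]; push_cast; ring) hs0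
    (cf.mono Ioi_subset_Ici_self) hAf
  obtain ⟨hB, eB⟩ := wL2_eq (s := s) 2 hr (by rw [hs]; push_cast; ring) hs0
    (cu.mono Ioi_subset_Ici_self) hBf
  obtain ⟨hD, eD⟩ := wL2_eq (s := s) 4 hr (by rw [hs]; push_cast; ring) hs0
    (cv.mono Ioi_subset_Ici_self) hDf
  obtain ⟨hN, eN⟩ := wL2_eq (s := s) 4 hr (by rw [hs]; push_cast; ring) hs0 cL hNf
  simp only [pow_zero, mul_one] at hA eA
  have htr := trace_ineq (t := √lam) hr hs0 hs1 (by positivity) cf cu hfd hA hB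
  have hen := energy_ineq hm0 hr0 hs0 hs1 hlam2 cf cu cv hfd hud hg hA hB hN
  have hDle : ∫ r in Ioi r0, r ^ s * r ^ 4 * d2 r0 f r ^ 2
      ≤ ∫ r in Ioi r0, (3 * (r ^ s * r ^ 4 * Lop r0 m0 l f r ^ 2)
        + 12 / k ^ 2 * (r ^ s * r ^ 2 * d1 r0 f r ^ 2)
        + 3 / k ^ 2 * lam ^ 2 * (r ^ s * f r ^ 2)) := by
    refine setIntegral_mono_on hD (((hN.const_mul _).add (hB.const_mul _)).add (hA.const_mul _))
      measurableSet_Ioi fun r hx => ?_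
    have hx' : r0 < r := hx
    have h0 : 0 < r := hr.trans hx
    have hw : 0 < r ^ s := Real.rpow_pos_of_pos h0 s
    have hkr : k ≤ 1 - 2 * m0 / r := by rw [hk]; gcongr
    have := second_deriv_bound hk0 hm0 (by linarith) hkr (hg r hx)
    calc r ^ s * r ^ 4 * d2 r0 f r ^ 2 = r ^ s * (r ^ 4 * d2 r0 f r ^ 2) := by ring
      _ ≤ r ^ s * (3 * (r ^ 4 * Lop r0 m0 l f r ^ 2) + 12 / k ^ 2 * (r ^ 2 * d1 r0 f r ^ 2)
          + 3 / k ^ 2 * lam ^ 2 * f r ^ 2) := by gcongr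
      _ = _ := by ring
  have hNB : IntegrableOn (fun r => 3 * (r ^ s * r ^ 4 * Lop r0 m0 l f r ^ 2)
      + 12 / k ^ 2 * (r ^ s * r ^ 2 * d1 r0 f r ^ 2)) (Ioi r0) := (hN.const_mul 3).add (hB.const_mul (12 / k ^ 2))
  rw [integral_add hNB (hA.const_mul _), integral_add (hN.const_mul _) (hB.const_mul _),
    integral_const_mul, integral_const_mul, integral_const_mul] at hDle
  rw [eA, eB, eD, eN, ← Real.sqrt_eq_rpow]
  rw [← hk] at hen
  have nn : ∀ (n : ℕ) (F : ℝ → ℝ), 0 ≤ ∫ r in Ioi r0, r ^ s * r ^ n * F r ^ 2 := fun n F =>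
    setIntegral_nonneg measurableSet_Ioi fun r hx => by
      have h0 : 0 < r := hr.trans hx
      positivity
  have hA0 := nn 0 f
  have hB0 := nn 2 (d1 r0 f)
  have hD0 := nn 4 (d2 r0 f)
  have hN0 := nn 4 (Lop r0 m0 l f)
  simp only [pow_zero, mul_one] at hA0
  generalize (∫ r in Ioi r0, r ^ s * f r ^ 2) = A at *
  generalize (∫ r in Ioi r0, r ^ s * r ^ 2 * d1 r0 f r ^ 2) = B at *
  generalize (∫ r in Ioi r0, r ^ s * r ^ 4 * d2 r0 f r ^ 2) = D at *
  generalize (∫ r in Ioi r0, r ^ s * r ^ 4 * Lop r0 m0 l f r ^ 2) = N at *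
  generalize d1 r0 f r0 - 2 / r0 * f r0 = b at *
  have ht2 : √lam ^ 2 = lam := Real.sq_sqrt (by linarith)
  have hab := absorb hk0 hk1 hA0 hB0 hN0 (t := √lam) (by positivity) hW hr
    (x := |f r0|) (b := |b|) (by rw [sq_abs]; exact htr) (by rw [ht2]; exact hen)
  rw [show √lam ^ 4 = (√lam ^ 2) ^ 2 by ring, ht2, sq_abs, ← hM] at hab
  have hsq : √lam ≤ √(1 + lam) := Real.sqrt_le_sqrt (by linarith)
  have hE : lam * B + lam ^ 2 * A ≤ M * (N + √(1 + lam) * b ^ 2) := by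
    refine hab.trans ?_
    gcongr
  have hreal : D + (1 + lam) * B + (1 + lam) ^ 2 * A
      ≤ (3 + (12 / k ^ 2 + 9 / 4) * M) * (N + √(1 + lam) * b ^ 2) := by
    have i1 : (1 + lam) * B ≤ 9 / 4 * (lam * B) := by
      rw [← mul_assoc]
      gcongr
      linarith
    have i2 : (1 + lam) ^ 2 * A ≤ 9 / 4 * (lam ^ 2 * A) := by
      rw [← mul_assoc]
      gcongr
      nlinarith
    have i3 : 12 / k ^ 2 * B ≤ 12 / k ^ 2 * (lam * B) := by
      gcongr
      exact le_mul_of_one_le_left hB0 (by linarith)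
    have i4 : 3 / k ^ 2 * lam ^ 2 * A ≤ 12 / k ^ 2 * (lam ^ 2 * A) := by
      rw [mul_assoc]
      gcongr
      norm_num
    have i5 : (12 / k ^ 2 + 9 / 4) * (lam * B + lam ^ 2 * A)
        ≤ (12 / k ^ 2 + 9 / 4) * (M * (N + √(1 + lam) * b ^ 2)) := by gcongr
    have i6 : 0 ≤ √(1 + lam) * b ^ 2 := by positivity
    linarith
  have hl1 : 0 ≤ 1 + lam := by linarith
  rw [← ENNReal.ofReal_mul (Real.sqrt_nonneg _), ← ENNReal.ofReal_pow hl1,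
    ← ENNReal.ofReal_mul hl1, ← ENNReal.ofReal_mul (by positivity),
    ← ENNReal.ofReal_add hN0 (by positivity), ← ENNReal.ofReal_mul (by positivity),
    ← ENNReal.ofReal_add hD0 (by positivity), ← ENNReal.ofReal_add (by positivity) (by positivity)]
  exact ENNReal.ofReal_le_ofReal hreal
end

section
/- There exists a constant C > 0 depending only on r0, m0 and δ such that for every integer ℓ ≥ 1 and every function f belonging to H²_δ ∩ C²_δ one has ‖f''‖²_{C⁰_{δ-2}} + (1+ℓ(ℓ+1))·‖f'‖²_{C⁰_{δ-1}} + (1+ℓ(ℓ+1))²·‖f‖²_{C⁰_δ} ≤ C·( ‖L_ℓ f‖²_{C⁰_{δ-2}} + (1+ℓ(ℓ+1))·( f'(r0) − (2/r0)·f(r0) )² ). -/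
/-! The estimate is a maximum-principle argument followed by interpolation.

Write `λ = ℓ(ℓ+1)`, `p = r(r - 2m0)`, `N` for the `C⁰_{δ-2}` norm of `L_ℓ f` and
`b = f'(r0) - (2/r0) f(r0)`. The function `K r^δ + B r^{-(ℓ+1)}` with `K = N/λ` and
`B = |b| r0^{ℓ+2}/(ℓ+3)` is a supersolution: for the first term this uses `δ(δ+1) < 0`, for the
second that `r^{-(ℓ+1)}` solves the equation with `m0 = 0`. Since the zeroth order coefficient of
`L_ℓ` is negative, the Robin coefficient `-2/r0` has the favourable sign, and `f` decays at
infinity, the maximum principle (`nonpos_of_max_principle`) gives `|f| ≤ K r^δ + B r^{-(ℓ+1)}`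
(`sup_bound`). The fast decay of the second barrier costs only `|b|/ℓ`, which is what
the weight `1 + ℓ(ℓ+1)` on the boundary term allows.

The equation bounds `f''` by `N`, `f'` and `λ f` (`second_deriv_bound`), and the mean value theorem
on an interval `[r, r + t r]` with `t` comparable to `1/ℓ` bounds `f'` by `ℓ f` and `f''/ℓ`
(`first_deriv_bound`). With a small enough constant in `t`, the `f'` contribution is absorbed, which
is legitimate because the norm of `f'` is finite. -/

open Set MeasureTheory
open scoped ENNReal

open Filter Topology

/-! ### The weighted sup norm in pointwise terms -/

lemma weight_le_iff {r A y : ℝ} (μ : ℝ) (hr : 0 < r) (hA : 0 ≤ A) :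
    r ^ (-2*μ) * y^2 ≤ A^2 ↔ |y| ≤ A * r ^ μ := by
  have h1 : 0 < r ^ μ := Real.rpow_pos_of_pos hr _
  have h2 : r ^ (-2*μ) = ((r ^ μ)^2)⁻¹ := by
    rw [← Real.rpow_natCast, ← Real.rpow_mul hr.le, ← Real.rpow_neg hr.le]
    congr 1; push_cast; ring
  rw [h2, inv_mul_le_iff₀ (by positivity), ← sq_abs y, ← mul_pow, mul_comm (r ^ μ),
    pow_le_pow_iff_left₀ (abs_nonneg _) (by positivity) two_ne_zero]

lemma wC0_le_iff {r0 A : ℝ} (μ : ℝ) (f : ℝ → ℝ) (hr : 0 < r0) (hA : 0 ≤ A) :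
    wC0 r0 μ f ≤ ENNReal.ofReal (A^2) ↔ ∀ r, r0 ≤ r → |f r| ≤ A * r ^ μ := by
  unfold wC0
  simp only [iSup_le_iff, Set.mem_Ici]
  refine forall₂_congr fun r h => ?_
  rw [ENNReal.ofReal_le_ofReal_iff (by positivity), weight_le_iff μ (hr.trans_le h) hA]

lemma wC0_eq {r0 μ : ℝ} {f : ℝ → ℝ} (h : wC0 r0 μ f ≠ ⊤) :
    ∃ A : ℝ, 0 ≤ A ∧ wC0 r0 μ f = ENNReal.ofReal (A^2) :=
  ⟨√(wC0 r0 μ f).toReal, Real.sqrt_nonneg _, by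
    rw [Real.sq_sqrt ENNReal.toReal_nonneg, ENNReal.ofReal_toReal h]⟩

/-! ### Maximum principle and barrier -/

/-- A function vanishing at infinity is nonpositive if it is strictly increasing at the boundary
when positive there, and strictly convex at each of its positive critical points. -/
lemma nonpos_of_max_principle {r0 : ℝ} {u u1 u2 : ℝ → ℝ}
    (hu : ∀ r, r0 ≤ r → HasDerivWithinAt u (u1 r) (Set.Ici r0) r)
    (hu1 : ∀ r, r0 ≤ r → HasDerivWithinAt u1 (u2 r) (Set.Ici r0) r)
    (hlim : Tendsto u atTop (𝓝 0))
    (hint : ∀ r, r0 ≤ r → 0 < u r → u1 r = 0 → 0 < u2 r)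
    (hbd : 0 < u r0 → 0 < u1 r0) : ∀ r, r0 ≤ r → u r ≤ 0 := by
  intro r hr
  by_contra! hpos
  have hc : ContinuousOn u (Set.Ici r0) := fun x hx => (hu x hx).continuousWithinAt
  obtain ⟨x, hx, hmax⟩ := hc.exists_isMaxOn' isClosed_Ici (x₀ := r) hr (by
    rw [eventually_inf_principal, cocompact_eq_atBot_atTop, eventually_sup]
    constructor
    · filter_upwards [eventually_lt_atBot r0] with y hy hy'
      exact absurd hy' (not_le.2 hy)
    · filter_upwards [hlim.eventually_lt_const hpos] with y hy _ using hy.le)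
  have hx' : r0 ≤ x := hx
  have hux : 0 < u x := hpos.trans_le (hmax hr)
  have hr' : HasDerivWithinAt u1 (u2 x) (Set.Ioi x) x :=
    (hu1 x hx).mono fun y hy => hx'.trans (le_of_lt hy)
  -- Either way `u` would increase strictly to the right of its maximum point.
  have hev : ∀ᶠ y in 𝓝[>] x, 0 < u1 y := by
    rcases hx'.eq_or_lt with rfl | hlt
    · exact hr'.continuousWithinAt.eventually_const_lt (hbd hux)
    · have hz : u1 x = 0 := by
        have hn : Set.Ici r0 ∈ 𝓝 x := Ici_mem_nhds hlt
        exact (hmax.isLocalMax hn).hasDerivAt_eq_zero ((hu x hx).hasDerivAt hn)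
      have h2 := hint x hx' hux hz
      have hs := (hasDerivWithinAt_iff_tendsto_slope' (by simp)).1 hr'
      filter_upwards [hs.eventually_const_lt h2, self_mem_nhdsWithin] with y hy hxy
      rw [slope_def_field, hz, sub_zero] at hy
      exact (div_pos_iff_of_pos_right (sub_pos.2 hxy)).1 hy
  obtain ⟨z, hz, hzs⟩ := mem_nhdsGT_iff_exists_Ioc_subset.1 hev
  have hxz : x < z := hz
  have hm : StrictMonoOn u (Set.Icc x z) := by
    refine strictMonoOn_of_deriv_pos (convex_Icc _ _)
      (hc.mono fun y hy => hx'.trans hy.1) fun y hy => ?_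
    rw [interior_Icc] at hy
    have hy' : r0 < y := hx'.trans_lt hy.1
    rw [((hu y hy'.le).hasDerivAt (Ici_mem_nhds hy')).deriv]
    exact hzs ⟨hy.1, hy.2.le⟩
  have := hm (Set.left_mem_Icc.2 hxz.le) (Set.right_mem_Icc.2 hxz.le) hxz
  exact absurd (hmax (show z ∈ Set.Ici r0 from hx'.trans hxz.le)) (not_le.2 this)

/-- The supersolution inequality for the barrier, at a point: `X = K r^{δ-2}` and
`Y = B r^{-s-2}` with `s = ℓ+1`, so the critical point condition is `f1 = r (δ X - s Y)`. -/
lemma barrier_convex {m0 r δ s X Y f f1 f2 : ℝ} (hm0 : 0 < m0) (hr : 2*m0 < r)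
    (hδ1 : -1 < δ) (hδ2 : δ < 0) (hs : 1 < s) (hX : 0 ≤ X) (hY : 0 ≤ Y)
    (hf : (X + Y) * r^2 < f) (hf1 : f1 = r * (δ * X - s * Y))
    (hL : -((s-1)*s) * X ≤ f2 + (2*(r - m0)/(r*(r - 2*m0))) * f1
      - ((s-1)*s/(r*(r - 2*m0))) * f) :
    0 < f2 - δ*(δ-1)*X - s*(s+1)*Y := by
  have hr0 : 0 < r := by linarith
  have hp : 0 < r*(r - 2*m0) := mul_pos hr0 (by linarith)
  have e : f2 + (2*(r - m0)/(r*(r - 2*m0))) * f1 - ((s-1)*s/(r*(r - 2*m0))) * f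
      = (r*(r-2*m0)*f2 + 2*(r-m0)*f1 - (s-1)*s*f) / (r*(r - 2*m0)) := by
    have h2 : r - 2*m0 ≠ 0 := by linarith
    field_simp
  rw [e, le_div_iff₀ hp, hf1] at hL
  have hl : 0 < (s-1)*s := mul_pos (by linarith) (by linarith)
  have h1 := mul_lt_mul_of_pos_left hf hl
  have hXc : 0 ≤ (2*m0*r*((s-1)*s) + r^2*((-δ)*(1+δ)) + 2*m0*r*δ^2) * X := by
    have : 0 ≤ (-δ)*(1+δ) := mul_nonneg (by linarith) (by linarith)
    positivity
  have hYc : 0 ≤ (2*m0*r*s^2) * Y := by positivity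
  have : 0 < r*(r-2*m0) * (f2 - δ*(δ-1)*X - s*(s+1)*Y) := by nlinarith
  exact (mul_pos_iff_of_pos_left hp).1 this

lemma hasDeriv_rpow {r0 r : ℝ} (c a : ℝ) (hr : 0 < r) :
    HasDerivWithinAt (fun x => c * x ^ a) (c * a * r ^ (a-1)) (Set.Ici r0) r := by
  rw [mul_assoc]
  exact ((Real.hasDerivAt_rpow_const (Or.inl hr.ne')).const_mul c).hasDerivWithinAt

/-- One-sided comparison of `f` with `K r^δ + B r^{-s}`, where `s = ℓ+1`. -/
lemma upper_bound {m0 r0 δ s K b : ℝ} {f f1 f2 : ℝ → ℝ} (hm0 : 0 < m0) (hr0 : 2*m0 < r0)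
    (hδ1 : -1 < δ) (hδ2 : δ < 0) (hs : 1 < s) (hK : 0 ≤ K) (hb : 0 ≤ b)
    (hf : ∀ r, r0 ≤ r → HasDerivWithinAt f (f1 r) (Set.Ici r0) r)
    (hf1 : ∀ r, r0 ≤ r → HasDerivWithinAt f1 (f2 r) (Set.Ici r0) r)
    (hlim : Tendsto f atTop (𝓝 0))
    (hL : ∀ r, r0 ≤ r → -((s-1)*s) * (K * r^(δ-2)) ≤
      f2 r + (2*(r - m0)/(r*(r - 2*m0))) * f1 r - ((s-1)*s/(r*(r - 2*m0))) * f r)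
    (hbd : -b ≤ f1 r0 - (2/r0) * f r0) :
    ∀ r, r0 ≤ r → f r ≤ (K + b * r0^(1-δ) / (s+2)) * r^δ := by
  have hr0' : 0 < r0 := by linarith
  set B : ℝ := b * r0^(s+1) / (s+2) with hB
  have hB0 : 0 ≤ B := by positivity
  have key := nonpos_of_max_principle (r0 := r0)
    (u := fun r => f r - K * r^δ - B * r^(-s))
    (u1 := fun r => f1 r - K * δ * r^(δ-1) - B * (-s) * r^(-s-1))
    (u2 := fun r => f2 r - K * δ * (δ-1) * r^(δ-1-1) - B * (-s) * (-s-1) * r^(-s-1-1))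
    (fun r hr => ((hf r hr).sub (hasDeriv_rpow _ _ (hr0'.trans_le hr))).sub
      (hasDeriv_rpow _ _ (hr0'.trans_le hr)))
    (fun r hr => ((hf1 r hr).sub (hasDeriv_rpow _ _ (hr0'.trans_le hr))).sub
      (hasDeriv_rpow _ _ (hr0'.trans_le hr)))
    (by
      have h1 : Tendsto (fun r : ℝ => r^δ) atTop (𝓝 0) := by
        simpa using tendsto_rpow_neg_atTop (y := -δ) (by linarith)
      have h2 : Tendsto (fun r : ℝ => r^(-s)) atTop (𝓝 0) :=
        tendsto_rpow_neg_atTop (by linarith)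
      simpa using (hlim.sub (h1.const_mul K)).sub (h2.const_mul B))
    (by
      intro r hr hu hu1
      have hrp : 0 < r := hr0'.trans_le hr
      have e1 : r^δ = r^(δ-2) * r^2 := by
        rw [← Real.rpow_natCast, ← Real.rpow_add hrp]; congr 1; push_cast; ring
      have e2 : r^(δ-1) = r^(δ-2) * r := by
        rw [← Real.rpow_add_one hrp.ne']; congr 1; ring
      have e3 : r^(-s) = r^(-s-2) * r^2 := by
        rw [← Real.rpow_natCast, ← Real.rpow_add hrp]; congr 1; push_cast; ring
      have e4 : r^(-s-1) = r^(-s-2) * r := by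
        rw [← Real.rpow_add_one hrp.ne']; congr 1; ring
      have e5 : δ - 1 - 1 = δ - 2 := by ring
      have e6 : -s - 1 - 1 = -s - 2 := by ring
      rw [e1, e3] at hu
      rw [e2, e4] at hu1
      rw [e5, e6]
      have hX : 0 ≤ K * r^(δ-2) := by positivity
      have hY : 0 ≤ B * r^(-s-2) := by positivity
      have := barrier_convex (f := f r) (f1 := f1 r) (f2 := f2 r) hm0 (hr0.trans_le hr) hδ1 hδ2
        hs hX hY (by linarith) (by linarith) (hL r hr)
      linarith)
    (by
      intro hu
      have e2 : r0^δ = r0^(δ-1) * r0 := by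
        rw [← Real.rpow_add_one hr0'.ne']; congr 1; ring
      have e4 : r0^(-s) = r0^(-s-1) * r0 := by
        rw [← Real.rpow_add_one hr0'.ne']; congr 1; ring
      have hBb : (s+2) * (B * r0^(-s-1)) = b := by
        have : r0^(s+1) * r0^(-s-1) = 1 := by
          rw [← Real.rpow_add hr0']; simp
        have h2 : s + 2 ≠ 0 := by linarith
        rw [hB]; field_simp; rw [mul_assoc, this, mul_one]
      simp only [e2, e4] at hu ⊢
      have hX : 0 ≤ (2 - δ) * (K * r0^(δ-1)) := mul_nonneg (by linarith) (by positivity)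
      have h3 : 0 < (2/r0) * (f r0 - K * (r0^(δ-1) * r0) - B * (r0^(-s-1) * r0)) := by positivity
      have h4 : (2/r0) * (f r0 - K * (r0^(δ-1) * r0) - B * (r0^(-s-1) * r0))
        = (2/r0) * f r0 - 2 * (K * r0^(δ-1)) - 2 * (B * r0^(-s-1)) := by field_simp
      linarith)
  intro r hr
  have hrp : 0 < r := hr0'.trans_le hr
  have h1 : r^(-s) ≤ r0^(-s-δ) * r^δ := by
    have : r^(-s) = r^(-s-δ) * r^δ := by rw [← Real.rpow_add hrp]; congr 1; ring
    rw [this]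
    exact mul_le_mul_of_nonneg_right
      (Real.rpow_le_rpow_of_nonpos hr0' hr (by linarith)) (by positivity)
  have h2 : B * (r0^(-s-δ) * r^δ) = b * r0^(1-δ) / (s+2) * r^δ := by
    have : r0^(1-δ) = r0^(s+1) * r0^(-s-δ) := by
      rw [← Real.rpow_add hr0']; congr 1; ring
    rw [hB, this]; ring
  have h3 := mul_le_mul_of_nonneg_left h1 hB0
  have h4 : f r - K * r^δ - B * r^(-s) ≤ 0 := key r hr
  linarith

/-- The weighted sup bound on `f`: the boundary datum enters with a gain of `1/ℓ`, the source with
a gain of `1/ℓ²`. -/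
lemma sup_bound {m0 r0 δ l N : ℝ} {f f1 f2 : ℝ → ℝ} (hm0 : 0 < m0) (hr0 : 2*m0 < r0)
    (hδ1 : -1 < δ) (hδ2 : δ < 0) (hl : 1 ≤ l) (hN : 0 ≤ N)
    (hf : ∀ r, r0 ≤ r → HasDerivWithinAt f (f1 r) (Set.Ici r0) r)
    (hf1 : ∀ r, r0 ≤ r → HasDerivWithinAt f1 (f2 r) (Set.Ici r0) r)
    (hlim : Tendsto f atTop (𝓝 0))
    (hL : ∀ r, r0 ≤ r → |f2 r + (2*(r - m0)/(r*(r - 2*m0))) * f1 r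
      - (l*(l+1)/(r*(r - 2*m0))) * f r| ≤ N * r^(δ-2)) :
    ∀ r, r0 ≤ r → |f r| ≤
      (N/(l*(l+1)) + |f1 r0 - (2/r0) * f r0| * r0^(1-δ) / (l+3)) * r^δ := by
  have hll : 0 < l*(l+1) := by positivity
  have hK : 0 ≤ N/(l*(l+1)) := by positivity
  have e : ∀ x : ℝ, -((l+1-1)*(l+1)) * (N/(l*(l+1)) * x) = -(N*x) := by
    intro x; rw [add_sub_cancel_right]; field_simp
  have h3 : l + 3 = l + 1 + 2 := by ring
  have hs : 1 < l + 1 := by linarith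
  intro r hr
  rw [abs_le', h3]
  constructor
  · refine upper_bound hm0 hr0 hδ1 hδ2 hs hK (abs_nonneg _) hf hf1 hlim (fun x hx => ?_)
      (neg_abs_le _) r hr
    rw [e, add_sub_cancel_right]
    exact (abs_le.1 (hL x hx)).1
  · refine upper_bound (f := fun x => -f x) (f1 := fun x => -f1 x) (f2 := fun x => -f2 x)
      hm0 hr0 hδ1 hδ2 hs hK (abs_nonneg _) (fun x hx => (hf x hx).neg)
      (fun x hx => (hf1 x hx).neg) (by simpa using hlim.neg) (fun x hx => ?_) ?_ r hr
    · rw [e, add_sub_cancel_right]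
      have := (abs_le.1 (hL x hx)).2
      linarith
    · have := le_abs_self (f1 r0 - (2/r0) * f r0)
      linarith

/-! ### Derivative bounds -/

/-- Interpolation: the mean value theorem on `[r, r + t r]`, for both `f` and `f'`. -/
lemma first_deriv_bound {r0 δ A G t : ℝ} {f f1 f2 : ℝ → ℝ} (hr0 : 0 < r0) (hδ : δ < 0)
    (hA : 0 ≤ A) (hG : 0 ≤ G) (ht : 0 < t)
    (hf : ∀ r, r0 ≤ r → HasDerivWithinAt f (f1 r) (Set.Ici r0) r)
    (hf1 : ∀ r, r0 ≤ r → HasDerivWithinAt f1 (f2 r) (Set.Ici r0) r)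
    (h0 : ∀ r, r0 ≤ r → |f r| ≤ A * r^δ) (h2 : ∀ r, r0 ≤ r → |f2 r| ≤ G * r^(δ-2)) :
    ∀ r, r0 ≤ r → |f1 r| ≤ (2*A/t + t*G) * r^(δ-1) := by
  have mvt : ∀ g g1 : ℝ → ℝ, (∀ r, r0 ≤ r → HasDerivWithinAt g (g1 r) (Set.Ici r0) r) →
      ∀ a c, r0 ≤ a → a < c → ∃ x ∈ Set.Ioo a c, g1 x = (g c - g a) / (c - a) := by
    intro g g1 hg a c ha hac
    refine exists_hasDerivAt_eq_slope g g1 hac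
      (fun x hx => ((hg x (ha.trans hx.1)).continuousWithinAt).mono fun y hy => ha.trans hy.1)
      fun x hx => (hg x (ha.trans hx.1.le)).hasDerivAt (Ici_mem_nhds (ha.trans_lt hx.1))
  intro r hr
  have hrp : 0 < r := hr0.trans_le hr
  have htr : 0 < t * r := by positivity
  obtain ⟨x, hx, hx1⟩ := mvt f f1 hf r (r + t*r) hr (by linarith)
  obtain ⟨y, hy, hy1⟩ := mvt f1 f2 hf1 r x hr hx.1
  have hfa := h0 r hr
  have hfb : |f (r + t*r)| ≤ A * r^δ := (h0 _ (by linarith)).trans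
    (mul_le_mul_of_nonneg_left (Real.rpow_le_rpow_of_nonpos hrp (by linarith) hδ.le) hA)
  have hfy : |f2 y| ≤ G * r^(δ-2) := (h2 y (hr.trans hy.1.le)).trans
    (mul_le_mul_of_nonneg_left (Real.rpow_le_rpow_of_nonpos hrp hy.1.le (by linarith)) hG)
  have b1 : |f1 x| ≤ 2*A/t * r^(δ-1) := by
    have e : r^δ = r^(δ-1) * r := by rw [← Real.rpow_add_one hrp.ne']; congr 1; ring
    rw [hx1, add_sub_cancel_left, abs_div, abs_of_pos htr, div_le_iff₀ htr]
    calc |f (r + t*r) - f r| ≤ |f (r+t*r)| + |f r| := abs_sub _ _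
      _ ≤ 2 * (A * r^δ) := by linarith
      _ = _ := by rw [e]; field_simp
  have hxr : 0 < x - r := sub_pos.2 hx.1
  have b2 : |f1 x - f1 r| ≤ t*G * r^(δ-1) := by
    have e : r^(δ-1) = r^(δ-2) * r := by rw [← Real.rpow_add_one hrp.ne']; congr 1; ring
    have e2 : f1 x - f1 r = f2 y * (x - r) := by rw [hy1]; field_simp
    rw [e2, abs_mul, abs_of_pos hxr]
    calc |f2 y| * (x - r) ≤ (G * r^(δ-2)) * (t*r) :=
          mul_le_mul hfy (by linarith [hx.2]) hxr.le (by positivity)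
      _ = _ := by rw [e]; ring
  have b3 : |f1 r| ≤ |f1 x| + |f1 x - f1 r| := by
    have := abs_sub_abs_le_abs_sub (f1 r) (f1 x)
    rw [abs_sub_comm] at this; linarith
  linarith

/-- The equation controls `f''`, since `r²/(r(r-2m0)) ≤ r0/(r0-2m0)`. -/
lemma second_deriv_bound_s5 {m0 r0 δ q N A D r f f1 f2 : ℝ} (hm0 : 0 < m0) (hr0 : 2*m0 < r0)
    (hq : 0 ≤ q) (hr : r0 ≤ r) (h0 : |f| ≤ A * r^δ) (h1 : |f1| ≤ D * r^(δ-1))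
    (hL : |f2 + (2*(r - m0)/(r*(r - 2*m0))) * f1 - (q/(r*(r - 2*m0))) * f| ≤ N * r^(δ-2)) :
    |f2| ≤ (N + 2*(r0/(r0-2*m0))*D + q*(r0/(r0-2*m0))*A) * r^(δ-2) := by
  set κ := r0/(r0-2*m0) with hκ
  have hrp : 0 < r := by linarith
  have hd0 : 0 < r0 - 2*m0 := by linarith
  have hd : 0 < r - 2*m0 := by linarith
  have hκ0 : 0 < κ := div_pos (by linarith) hd0
  have hk : r ≤ κ * (r - 2*m0) := by
    rw [hκ, div_mul_eq_mul_div, le_div_iff₀ hd0]; nlinarith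
  have hp : 0 < r*(r - 2*m0) := by positivity
  have e1 : r^(δ-1) = r^(δ-2) * r := by rw [← Real.rpow_add_one hrp.ne']; congr 1; ring
  have e2 : r^δ = r^(δ-2) * r^2 := by
    rw [← Real.rpow_natCast, ← Real.rpow_add hrp]; congr 1; push_cast; ring
  have c1 : 2*(r - m0)/(r*(r - 2*m0)) ≤ 2*κ/r := by
    rw [div_le_div_iff₀ hp hrp]; nlinarith
  have c1' : 0 ≤ 2*(r - m0)/(r*(r - 2*m0)) := div_nonneg (by linarith) hp.le
  have c2 : q/(r*(r - 2*m0)) ≤ q*κ/r^2 := by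
    rw [div_le_div_iff₀ hp (by positivity)]
    have := mul_le_mul_of_nonneg_left hk (mul_nonneg hq hrp.le)
    nlinarith
  have c2' : 0 ≤ q/(r*(r - 2*m0)) := div_nonneg hq hp.le
  have t1 : |(2*(r - m0)/(r*(r - 2*m0))) * f1| ≤ 2*κ*D*r^(δ-2) := by
    rw [abs_mul, abs_of_nonneg c1']
    calc _ ≤ 2*κ/r * (D * r^(δ-1)) := mul_le_mul c1 h1 (abs_nonneg _) (by positivity)
      _ = _ := by rw [e1]; field_simp
  have t2 : |(q/(r*(r - 2*m0))) * f| ≤ q*κ*A*r^(δ-2) := by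
    rw [abs_mul, abs_of_nonneg c2']
    calc _ ≤ q*κ/r^2 * (A * r^δ) := mul_le_mul c2 h0 (abs_nonneg _) (by positivity)
      _ = _ := by rw [e2]; field_simp
  rw [abs_le] at *
  constructor <;> linarith [t1.1, t1.2, t2.1, t2.2, hL.1, hL.2]

/-- The final bookkeeping: with `M = N + ℓ b`, the three norms are `O(M/ℓ²)`, `O(M/ℓ)`, `O(M)`. -/
lemma combine {κ R l N b A D G : ℝ} (hκ : 1 ≤ κ) (hR : 0 ≤ R) (hl : 1 ≤ l) (hN : 0 ≤ N)
    (hb : 0 ≤ b) (hD0 : 0 ≤ D)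
    (hA : A = N/(l*(l+1)) + b * R/(l+3))
    (hG : G = N + 2*κ*D + l*(l+1)*κ*A)
    (hD : D ≤ 2*A/(1/(4*κ*l)) + 1/(4*κ*l)*G) :
    G^2 + (1+l*(l+1))*D^2 + (1+l*(l+1))^2*A^2 ≤
      2*((1+2*κ*((16*κ+1)*(1+R)+1)+2*κ*(1+R))^2 + 3*((16*κ+1)*(1+R)+1)^2 + 9*(1+R)^2)
        * (N^2 + (1+l*(l+1))*b^2) := by
  have hl0 : 0 < l := by linarith
  have hκ0 : 0 < κ := by linarith
  obtain ⟨M, hM⟩ : ∃ M, M = N + l*b := ⟨_, rfl⟩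
  have hlb : 0 ≤ l*b := by positivity
  have hM0 : 0 ≤ M := by linarith
  have hA0 : 0 ≤ A := by rw [hA]; positivity
  obtain ⟨c0, hc0⟩ : ∃ c0, c0 = 1 + R := ⟨_, rfl⟩
  have hc00 : 1 ≤ c0 := by linarith
  have a1 : l^2 * A ≤ c0 * M := by
    have x1 : l^2 * (N/(l*(l+1))) ≤ N := by
      rw [mul_div_assoc', div_le_iff₀ (by positivity)]; nlinarith
    have x2 : l^2 * (b*R/(l+3)) ≤ l*b*R := by
      rw [mul_div_assoc', div_le_iff₀ (by positivity)]
      have : 0 ≤ l*b*R := by positivity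
      nlinarith
    rw [hA, hc0, hM]
    have : 0 ≤ R*N := by positivity
    nlinarith
  obtain ⟨c1, hc1⟩ : ∃ c1, c1 = (16*κ+1)*c0+1 := ⟨_, rfl⟩
  have a2 : l * D ≤ c1 * M := by
    have y1 : 2*A/(1/(4*κ*l)) = 8*κ*l*A := by field_simp; ring
    have y2 : 1/(4*κ*l)*G = N/(4*κ*l) + D/(2*l) + (l+1)*A/4 := by rw [hG]; field_simp; ring
    rw [y1, y2] at hD
    have z1 : l*(N/(4*κ*l)) ≤ N/2 := by
      have : l*(N/(4*κ*l)) = N/(4*κ) := by field_simp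
      rw [this, div_le_div_iff₀ (by positivity) (by norm_num)]; nlinarith
    have z2 : l*(D/(2*l)) ≤ l*D/2 := by
      have : l*(D/(2*l)) = D/2 := by field_simp
      rw [this]; nlinarith
    have z3 : l*((l+1)*A/4) ≤ l^2*A/2 := by nlinarith [mul_nonneg (mul_nonneg hl0.le hA0) (by linarith : 0 ≤ l - 1)]
    have z4 := mul_le_mul_of_nonneg_left hD hl0.le
    have z5 : l * D ≤ (16*κ+1)*(l^2*A) + N := by linarith
    have z6 := mul_le_mul_of_nonneg_left a1 (by linarith : 0 ≤ 16*κ+1)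
    rw [hc1]; linarith
  have a3 : G ≤ (1+2*κ*c1+2*κ*c0)*M := by
    have w1 : D ≤ c1 * M := le_trans (by nlinarith) a2
    have w2 : l*(l+1)*A ≤ 2*(c0*M) := by
      have : l*(l+1) ≤ 2*l^2 := by nlinarith
      have := mul_le_mul_of_nonneg_right this hA0
      linarith
    have w3 := mul_le_mul_of_nonneg_left w1 hκ0.le
    have w4 := mul_le_mul_of_nonneg_left w2 hκ0.le
    rw [hG]; linarith
  have hG0 : 0 ≤ G := by rw [hG]; positivity
  have S : 1+l*(l+1) ≤ 3*l^2 := by nlinarith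
  have S0 : 0 ≤ 1+l*(l+1) := by positivity
  have f2 : G^2 ≤ ((1+2*κ*c1+2*κ*c0)*M)^2 := pow_le_pow_left₀ hG0 a3 2
  have f1 : (1+l*(l+1))*D^2 ≤ 3*(c1*M)^2 := by
    have := pow_le_pow_left₀ (by positivity) a2 2
    have := mul_le_mul_of_nonneg_right S (sq_nonneg D)
    nlinarith
  have f0 : (1+l*(l+1))^2*A^2 ≤ 9*(c0*M)^2 := by
    have h1 := pow_le_pow_left₀ (by positivity) a1 2
    have h2 := mul_le_mul_of_nonneg_right (pow_le_pow_left₀ S0 S 2) (sq_nonneg A)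
    nlinarith
  have fM : M^2 ≤ 2*(N^2 + (1+l*(l+1))*b^2) := by
    rw [hM]; linarith [sq_nonneg (N - l*b), mul_nonneg (by linarith : 0 ≤ 1 + l) (sq_nonneg b)]
  rw [← hc0, ← hc1]
  calc _ ≤ ((1+2*κ*c1+2*κ*c0)^2 + 3*c1^2 + 9*c0^2) * M^2 := by linarith
    _ ≤ ((1+2*κ*c1+2*κ*c0)^2 + 3*c1^2 + 9*c0^2) * (2*(N^2 + (1+l*(l+1))*b^2)) :=
        mul_le_mul_of_nonneg_left fM (by positivity)
    _ = _ := by ring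

theorem stmt5 (m0 r0 δ : ℝ) (hm0 : 0 < m0) (hr0 : 2*m0 < r0)
    (hδ1 : -1 < δ) (hδ2 : δ < -(1/2)) :
    ∃ C : ℝ, 0 < C ∧ ∀ (l : ℤ), 1 ≤ l → ∀ f : ℝ → ℝ, MemH2C2 r0 δ f →
      wC0 r0 (δ-2) (d2 r0 f)
        + ENNReal.ofReal (1 + (l:ℝ)*((l:ℝ)+1)) * wC0 r0 (δ-1) (d1 r0 f)
        + (ENNReal.ofReal (1 + (l:ℝ)*((l:ℝ)+1)))^2 * wC0 r0 δ f
      ≤ ENNReal.ofReal C *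
        (wC0 r0 (δ-2) (Lop r0 m0 l f)
          + ENNReal.ofReal (1 + (l:ℝ)*((l:ℝ)+1))
            * ENNReal.ofReal ((d1 r0 f r0 - (2/r0) * f r0)^2)) := by
  have hr0' : 0 < r0 := by linarith
  have hδ : δ < 0 := by linarith
  have hd0 : 0 < r0 - 2*m0 := by linarith
  obtain ⟨κ, hκ⟩ : ∃ κ, κ = r0/(r0-2*m0) := ⟨_, rfl⟩
  have hκ1 : 1 ≤ κ := by rw [hκ, le_div_iff₀ hd0]; linarith
  obtain ⟨R, hR⟩ : ∃ R, R = r0^(1-δ) := ⟨_, rfl⟩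
  have hR0 : 0 ≤ R := by rw [hR]; positivity
  obtain ⟨C, hC⟩ : ∃ C, C = 2*((1+2*κ*((16*κ+1)*(1+R)+1)+2*κ*(1+R))^2
    + 3*((16*κ+1)*(1+R)+1)^2 + 9*(1+R)^2) := ⟨_, rfl⟩
  have hC0 : 0 < C := by rw [hC]; positivity
  refine ⟨C, hC0, fun l hl f hf => ?_⟩
  obtain ⟨hcd, -, -, -, hn0, hn1, -⟩ := hf
  have hl' : (1:ℝ) ≤ (l:ℝ) := by exact_mod_cast hl
  by_cases htop : wC0 r0 (δ-2) (Lop r0 m0 l f) = ⊤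
  · rw [htop, top_add, ENNReal.mul_top (by simpa using hC0)]
    exact le_top
  obtain ⟨N, hN, hNeq⟩ := wC0_eq htop
  obtain ⟨F, hF, hFeq⟩ := wC0_eq hn0
  obtain ⟨D, hD, hDeq⟩ := wC0_eq hn1
  have pN := (wC0_le_iff _ _ hr0' hN).1 hNeq.le
  have pF := (wC0_le_iff _ _ hr0' hF).1 hFeq.le
  have pD := (wC0_le_iff _ _ hr0' hD).1 hDeq.le
  have hcd1 : ContDiffOn ℝ 1 (d1 r0 f) (Set.Ici r0) :=
    hcd.derivWithin (uniqueDiffOn_Ici r0) (by norm_num)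
  have k0 : ∀ r, r0 ≤ r → HasDerivWithinAt f (d1 r0 f r) (Set.Ici r0) r := fun r hr =>
    ((hcd.differentiableOn (by norm_num)) r hr).hasDerivWithinAt
  have k1 : ∀ r, r0 ≤ r → HasDerivWithinAt (d1 r0 f) (d2 r0 f r) (Set.Ici r0) r := fun r hr =>
    ((hcd1.differentiableOn (by norm_num)) r hr).hasDerivWithinAt
  have hlim : Tendsto f atTop (𝓝 0) := by
    have h1 : Tendsto (fun r : ℝ => r^δ) atTop (𝓝 0) := by
      simpa using tendsto_rpow_neg_atTop (y := -δ) (by linarith)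
    refine squeeze_zero_norm' ?_ (by simpa using h1.const_mul F)
    filter_upwards [eventually_ge_atTop r0] with r hr using pF r hr
  obtain ⟨b, hb⟩ : ∃ b, b = |d1 r0 f r0 - (2/r0) * f r0| := ⟨_, rfl⟩
  have hb0 : 0 ≤ b := by rw [hb]; positivity
  obtain ⟨A, hA⟩ : ∃ A, A = N/((l:ℝ)*((l:ℝ)+1)) + b * R/((l:ℝ)+3) := ⟨_, rfl⟩
  have hA0 : 0 ≤ A := by rw [hA]; positivity
  have pA : ∀ r, r0 ≤ r → |f r| ≤ A * r^δ := by
    rw [hA, hb, hR]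
    exact sup_bound hm0 hr0 hδ1 hδ hl' hN k0 k1 hlim pN
  obtain ⟨G, hG⟩ : ∃ G, G = N + 2*κ*D + (l:ℝ)*((l:ℝ)+1)*κ*A := ⟨_, rfl⟩
  have hG0 : 0 ≤ G := by rw [hG]; positivity
  have pG : ∀ r, r0 ≤ r → |d2 r0 f r| ≤ G * r^(δ-2) := by
    intro r hr
    rw [hG, hκ]
    exact second_deriv_bound_s5 hm0 hr0 (by positivity) hr (pA r hr) (pD r hr) (pN r hr)
  -- The step length makes the `D`-part of `G` contribute at most `D/2`.
  obtain ⟨t, ht⟩ : ∃ t, t = 1/(4*κ*(l:ℝ)) := ⟨_, rfl⟩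
  have ht0 : 0 < t := by rw [ht]; positivity
  have pD' := first_deriv_bound hr0' hδ hA0 hG0 ht0 k0 k1 pA pG
  have hD' : D ≤ 2*A/t + t*G := by
    have hnn : 0 ≤ 2*A/t + t*G := by positivity
    have := (wC0_le_iff (δ-1) (d1 r0 f) hr0' hnn).2 pD'
    rw [hDeq, ENNReal.ofReal_le_ofReal_iff (by positivity)] at this
    exact (pow_le_pow_iff_left₀ hD hnn two_ne_zero).1 this
  rw [ht] at hD'
  have fin := combine hκ1 hR0 hl' hN hb0 hD hA hG hD'
  rw [← hC] at fin
  have q0 := (wC0_le_iff _ _ hr0' hA0).2 pA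
  have q2 := (wC0_le_iff _ _ hr0' hG0).2 pG
  have hS : 0 ≤ 1 + (l:ℝ)*((l:ℝ)+1) := by positivity
  rw [hNeq, hDeq, ← sq_abs (d1 r0 f r0 - _), ← hb]
  calc _ ≤ ENNReal.ofReal (G^2) + ENNReal.ofReal (1 + (l:ℝ)*((l:ℝ)+1)) * ENNReal.ofReal (D^2)
        + (ENNReal.ofReal (1 + (l:ℝ)*((l:ℝ)+1)))^2 * ENNReal.ofReal (A^2) := by gcongr
    _ = ENNReal.ofReal (G^2 + (1 + (l:ℝ)*((l:ℝ)+1))*D^2 + (1 + (l:ℝ)*((l:ℝ)+1))^2*A^2) := by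
        rw [← ENNReal.ofReal_pow hS, ← ENNReal.ofReal_mul hS, ← ENNReal.ofReal_mul (by positivity),
          ← ENNReal.ofReal_add (by positivity) (by positivity),
          ← ENNReal.ofReal_add (by positivity) (by positivity)]
    _ ≤ ENNReal.ofReal (C * (N^2 + (1 + (l:ℝ)*((l:ℝ)+1))*b^2)) := ENNReal.ofReal_le_ofReal fin
    _ = _ := by
        rw [ENNReal.ofReal_mul hC0.le, ENNReal.ofReal_add (by positivity) (by positivity),
          ENNReal.ofReal_mul hS]
end

section
/- Let ℓ ≥ 1 be an integer. Suppose f belongs to H²_δ ∩ C²_δ and satisfies, for all r ≥ r0, the equation r(r−2m0)·f''(r) + 2(r−m0)·f'(r) − ℓ(ℓ+1)·f(r) = −8m0·f'(r) − ((8m0(r−m0) − m0²)/(r(r−2m0)))·f(r), together with the boundary condition f'(r0) − (2/r0)·f(r0) = 0. Then f is identically zero on [r0, ∞). -/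
/-!
The substitution `h = √(r(r - 2m₀)) f` turns the equation into
`r(r - 2m₀) h'' + 8m₀ h' = ℓ(ℓ+1) h`, whose integrating factor is `μ = ((r - 2m₀)/r)⁴`.
Hence the flux `E = μ h h'` satisfies `E' = μ (h'² + ℓ(ℓ+1) h² / (r(r - 2m₀))) ≥ 0`
(`flux_hasDerivWithinAt`), and the boundary condition gives `E(r₀) ≥ 0`.

If `E(r₁) > 0` for some `r₁`, then, since `μ ≤ 1`, `(h²)' = 2E/μ ≥ 2E(r₁)` on `[r₁, ∞)`, so `h²`
grows at least linearly. But `f = O(r^δ)` gives `h² = O(r^{2+2δ})` with `2 + 2δ < 1`, a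
contradiction (`linear_not_le_rpow`). So `E` vanishes identically, therefore so does
`E' ≥ μ ℓ(ℓ+1) f²`, and `f = 0`. The square root never appears below, because `h²` and `h h'` are
polynomial in `r`, `f` and `f'`.
-/

open Set MeasureTheory
open scoped ENNReal

/-- The flux `μ h h'`, with `μ = ((r - 2m)/r)⁴` and `h = √(r(r - 2m)) f`, where `g` stands for
`f'`. -/
noncomputable def flux (m : ℝ) (f g : ℝ → ℝ) (r : ℝ) : ℝ :=
  ((r - 2*m)/r)^4 * ((r - m) * f r ^ 2 + r * (r - 2*m) * (f r * g r))

/-- The derivative of the flux along solutions; the right-hand side is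
`μ (L h² / (r(r - 2m)) + h'²)` with `h = √(r(r - 2m)) f`. -/
theorem flux_hasDerivWithinAt {m r L k : ℝ} {s : Set ℝ} {f g : ℝ → ℝ}
    (hm : 0 < m) (hr : 2*m < r)
    (hf : HasDerivWithinAt f (g r) s r) (hg : HasDerivWithinAt g k s r)
    (heq : r*(r - 2*m) * k + 2*(r - m) * g r - L * f r
      = -(8*m) * g r - ((8*m*(r - m) - m^2)/(r*(r - 2*m))) * f r) :
    HasDerivWithinAt (flux m f g)
      (((r - 2*m)/r)^4 * (L * f r ^ 2
        + (r*(r - 2*m) * g r + (r - m) * f r)^2 / (r*(r - 2*m)))) s r := by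
  have h0 : 0 < r := by linarith
  have h1 : 0 < r - 2*m := by linarith
  have hid := hasDerivWithinAt_id r s
  have hμ := ((hid.sub_const (2*m)).div hid h0.ne').pow 4
  have hE := hμ.mul (((hid.sub_const m).mul (hf.pow 2)).add
    ((hid.mul (hid.sub_const (2*m))).mul (hf.mul hg)))
  have hk : k = (-(8*m) * g r - ((8*m*(r - m) - m^2)/(r*(r - 2*m))) * f r
      - 2*(r - m) * g r + L * f r) / (r*(r - 2*m)) := by
    rw [eq_div_iff (by positivity)]
    linarith
  refine hE.congr_deriv ?_
  subst hk
  have h0' := h0.ne'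
  have h1' := h1.ne'
  simp only [id, Pi.pow_apply, Pi.mul_apply, Pi.add_apply, Pi.div_apply, Nat.reduceSub,
    Nat.cast_ofNat, pow_one]
  field_simp
  ring

/-- A linearly growing function is not bounded by a multiple of a power less than one. -/
theorem linear_not_le_rpow {c C a p : ℝ} (hc : 0 < c) (hp : p < 1)
    (h : ∀ r, a ≤ r → c * (r - a) ≤ C * r ^ p) : False := by
  have h1 : Filter.Tendsto (fun r : ℝ => C * r ^ (-(1 - p))) Filter.atTop (nhds 0) := by
    simpa using (tendsto_rpow_neg_atTop (sub_pos.2 hp)).const_mul C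
  have h2 := h1.eventually_lt_const (show 0 < c / 2 by positivity)
  obtain ⟨r, hr, hra, hr0, hr1⟩ := (h2.and ((Filter.eventually_ge_atTop a).and
    ((Filter.eventually_gt_atTop 0).and (Filter.eventually_gt_atTop (2*a))))).exists
  have h3 := h r hra
  have h4 : r ^ p = r ^ (-(1 - p)) * r := by
    rw [← Real.rpow_add_one hr0.ne']
    congr 1
    ring
  rw [h4] at h3
  nlinarith

/-- Finiteness of the weighted `C⁰` norm as a pointwise decay bound. -/
theorem wC0_bound {r0 μ : ℝ} {f : ℝ → ℝ} (hr0 : 0 < r0) (h : wC0 r0 μ f ≠ ⊤) :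
    ∃ C, ∀ r, r0 ≤ r → f r ^ 2 ≤ C * r ^ (2*μ) := by
  refine ⟨(wC0 r0 μ f).toReal, fun r hr => ?_⟩
  have hpos : 0 < r := by linarith
  have h1 : ENNReal.ofReal (r ^ (-2*μ) * (f r)^2) ≤ wC0 r0 μ f :=
    le_iSup₂ (f := fun r (_ : r ∈ Set.Ici r0) => ENNReal.ofReal (r ^ (-2*μ) * (f r)^2)) r hr
  have h2 := (ENNReal.ofReal_le_iff_le_toReal h).1 h1
  have h3 : r ^ (-2*μ) * r ^ (2*μ) = 1 := by
    rw [← Real.rpow_add hpos]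
    simp
  have h4 : 0 < r ^ (2*μ) := Real.rpow_pos_of_pos hpos _
  calc f r ^ 2 = (r ^ (-2*μ) * r ^ (2*μ)) * f r ^ 2 := by rw [h3, one_mul]
    _ = (r ^ (-2*μ) * f r ^ 2) * r ^ (2*μ) := by ring
    _ ≤ _ := by gcongr

theorem stmt6 (m0 r0 δ : ℝ) (hm0 : 0 < m0) (hr0 : 2*m0 < r0)
    (hδ1 : -1 < δ) (hδ2 : δ < -(1/2))
    (l : ℤ) (hl : 1 ≤ l)
    (f : ℝ → ℝ) (hf : MemH2C2 r0 δ f)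
    (heq : ∀ r, r0 ≤ r →
      r*(r - 2*m0) * d2 r0 f r + 2*(r - m0) * d1 r0 f r
        - (l:ℝ)*((l:ℝ)+1) * f r
      = -(8*m0) * d1 r0 f r - ((8*m0*(r - m0) - m0^2)/(r*(r - 2*m0))) * f r)
    (hbc : d1 r0 f r0 - (2/r0) * f r0 = 0) :
    ∀ r, r0 ≤ r → f r = 0 := by
  obtain ⟨hC2, -, -, -, hC0, -, -⟩ := hf
  have hr0pos : 0 < r0 := by linarith
  have hl' : (1:ℝ) ≤ l := by exact_mod_cast hl
  have hL : 0 < (l:ℝ)*((l:ℝ)+1) := by positivity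
  have hf' : ∀ r, r0 ≤ r → HasDerivWithinAt f (d1 r0 f r) (Ici r0) r := fun r hr =>
    (hC2.differentiableOn (by norm_num) r hr).hasDerivWithinAt
  have hg' : ∀ r, r0 ≤ r → HasDerivWithinAt (d1 r0 f) (d2 r0 f r) (Ici r0) r := fun r hr =>
    ((hC2.derivWithin (uniqueDiffOn_Ici r0) (m := 1) (by norm_num)).differentiableOn
      (by norm_num) r hr).hasDerivWithinAt
  set E := flux m0 f (d1 r0 f) with hE
  have hE' := fun r (hr : r0 ≤ r) =>
    flux_hasDerivWithinAt hm0 (hr0.trans_le hr) (hf' r hr) (hg' r hr) (heq r hr)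
  rw [← hE] at hE'
  have hmono : MonotoneOn E (Ici r0) := by
    refine monotoneOn_of_hasDerivWithinAt_nonneg (convex_Ici r0)
      (fun r hr => (hE' r hr).continuousWithinAt)
      (fun r hr => (hE' r (interior_subset hr)).mono interior_subset) (fun r hr => ?_)
    have hr' : r0 ≤ r := interior_subset hr
    have h1 : 0 < r := by linarith
    have h2 : 0 < r - 2*m0 := by linarith
    positivity
  have hE0 : 0 ≤ E r0 := by
    have h1 : d1 r0 f r0 = (2/r0) * f r0 := by linarith
    have h2 : 0 < r0 - 2*m0 := by linarith
    have h3 : 0 < r0 - m0 := by linarith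
    have h4 : E r0 = ((r0 - 2*m0)/r0)^4 * (((r0 - m0) + 2*(r0 - 2*m0)) * f r0 ^ 2) := by
      rw [hE, flux, h1]
      field_simp
    rw [h4]
    positivity
  -- A positive value of the flux would force linear growth of `h²`.
  have hEle : ∀ r, r0 ≤ r → E r ≤ 0 := by
    intro r1 hr1
    by_contra! hpos
    obtain ⟨C, hC⟩ := wC0_bound hr0pos hC0
    have hG' : ∀ r, r1 ≤ r → HasDerivWithinAt
        (fun r => r * (r - 2*m0) * f r ^ 2 - 2 * E r1 * r)
        (2 * ((r - m0) * f r ^ 2 + r * (r - 2*m0) * (f r * d1 r0 f r)) - 2 * E r1)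
        (Ici r1) r := by
      intro r hr
      have hid := hasDerivWithinAt_id r (Ici r1)
      have h := ((hid.mul (hid.sub_const (2*m0))).mul
        (((hf' r (hr1.trans hr)).mono (Ici_subset_Ici.2 hr1)).pow 2)).sub
        (hid.const_mul (2 * E r1))
      refine h.congr_deriv ?_
      simp only [id, Pi.pow_apply, Pi.mul_apply]
      ring
    have hGmono : MonotoneOn (fun r => r * (r - 2*m0) * f r ^ 2 - 2 * E r1 * r) (Ici r1) := by
      refine monotoneOn_of_hasDerivWithinAt_nonneg (convex_Ici r1)
        (fun r hr => (hG' r hr).continuousWithinAt)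
        (fun r hr => (hG' r (interior_subset hr)).mono interior_subset) (fun r hr => ?_)
      have hr' : r1 ≤ r := interior_subset hr
      have h1 : 0 < r := by linarith
      have h2 : 0 < r - 2*m0 := by linarith
      have h3 : E r1 ≤ E r := hmono hr1 (hr1.trans hr') hr'
      have h4 : ((r - 2*m0)/r)^4 ≤ 1 :=
        pow_le_one₀ (by positivity) ((div_le_one h1).2 (by linarith))
      have h5 : 0 < ((r - 2*m0)/r)^4 := by positivity
      have h6 : E r = ((r - 2*m0)/r)^4
        * ((r - m0) * f r ^ 2 + r * (r - 2*m0) * (f r * d1 r0 f r)) := rfl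
      set X := (r - m0) * f r ^ 2 + r * (r - 2*m0) * (f r * d1 r0 f r)
      have hX : 0 < X := pos_of_mul_pos_right (by linarith) h5.le
      nlinarith
    refine linear_not_le_rpow (c := 2 * E r1) (C := C) (a := r1) (p := 2 + 2*δ)
      (by linarith) (by linarith) (fun r hr => ?_)
    have h1 : 0 < r := by linarith
    have h2 := hGmono (mem_Ici.2 le_rfl) hr hr
    have h3 := hC r (hr1.trans hr)
    have h4 : 0 ≤ r1 * (r1 - 2*m0) * f r1 ^ 2 :=
      mul_nonneg (mul_nonneg (by linarith) (by linarith)) (sq_nonneg _)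
    have h5 : r * (r - 2*m0) * f r ^ 2 ≤ r^2 * f r ^ 2 :=
      mul_le_mul_of_nonneg_right (by nlinarith) (sq_nonneg _)
    have h6 : r ^ (2 + 2*δ) = r^2 * r ^ (2*δ) := by
      rw [Real.rpow_add h1, Real.rpow_two]
    have h7 : r^2 * f r ^ 2 ≤ r^2 * (C * r ^ (2*δ)) := by gcongr
    simp only at h2
    rw [h6]
    linarith
  have hEzero : ∀ r ∈ Ici r0, E r = 0 := fun r hr =>
    le_antisymm (hEle r hr) (hE0.trans (hmono (mem_Ici.2 le_rfl) hr hr))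
  intro r hr
  have h1 : 0 < r := by linarith
  have h2 : 0 < r - 2*m0 := by linarith
  have h3 : HasDerivWithinAt E 0 (Ici r0) r :=
    (hasDerivWithinAt_const r (Ici r0) (0:ℝ)).congr hEzero (hEzero r hr)
  have h4 := (uniqueDiffOn_Ici r0 r hr).eq_deriv _ (hE' r hr) h3
  have h5 := (mul_eq_zero.1 h4).resolve_left (by positivity)
  by_contra hne
  have h6 : 0 < (l:ℝ)*((l:ℝ)+1) * f r ^ 2 := by positivity
  have h7 : 0 ≤ (r*(r - 2*m0) * d1 r0 f r + (r - m0) * f r)^2 / (r*(r - 2*m0)) := by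
    positivity
  linarith
end

section
/- For every real number h there exists a unique function c belonging to H²_δ ∩ C²_δ such that r(r−2m0)·c''(r) + 2(r−m0)·c'(r) = 0 for all r ≥ r0 and 2·√(r0(r0−2m0))·c(r0) = h. -/
/-!
The equation says that `r (r - 2 m₀) c'` has zero derivative, so it is a constant, and its solutions
are `c = D + k u` with `u r = log r - log (r - 2 m₀)`, because `r (r - 2 m₀) u' = -2 m₀`
(`exists_affine_of_ode`).

Existence: `u`, `u'`, `u''` are `O(r⁻¹)`, `O(r⁻²)`, `O(r⁻³)` on `[r₀, ∞)`, and a function of size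
`O(r ^ s)` has finite weighted norms of every weight `μ > s` (`wL2_ne_top`, `wC0_ne_top`). Since
`δ > -1`, every multiple of `u` lies in `H²_δ ∩ C²_δ` (`memH2C2_mul_sol`), and `u r₀ > 0` allows the
boundary condition to be solved for the multiple.

Uniqueness: since `δ < 0`, finiteness of the `C⁰_δ` norm forces decay at infinity
(`tendsto_zero_of_wC0`), so `D = 0`; the boundary condition then determines `k`.
-/

open Set MeasureTheory
open scoped ENNReal

/-- The decaying solution `log (r / (r - 2 m₀))`, written as a difference of logarithms. -/
noncomputable def sol (m0 : ℝ) (r : ℝ) : ℝ := Real.log r - Real.log (r - 2*m0)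

lemma wL2_ne_top {r0 μ s K : ℝ} {f : ℝ → ℝ} (hr0 : 0 < r0) (hs : s < μ)
    (hf : ∀ r, r0 ≤ r → |f r| ≤ K * r ^ s) : wL2 r0 μ f ≠ ⊤ := by
  have hint : IntegrableOn (fun r : ℝ => K^2 * r ^ (-2*μ-1+2*s)) (Set.Ioi r0) :=
    (integrableOn_Ioi_rpow_of_lt (by linarith) hr0).const_mul _
  refine ne_top_of_le_ne_top hint.lintegral_lt_top.ne ?_
  refine setLIntegral_mono' measurableSet_Ioi fun r hr => ENNReal.ofReal_le_ofReal ?_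
  have hr' : 0 < r := hr0.trans hr
  have h1 : (f r)^2 ≤ (K * r ^ s)^2 := by
    rw [← sq_abs]; exact pow_le_pow_left₀ (abs_nonneg _) (hf r (le_of_lt hr)) 2
  calc r ^ (-2*μ-1) * (f r)^2 ≤ r ^ (-2*μ-1) * (K * r ^ s)^2 := by gcongr
    _ = K^2 * r ^ (-2*μ-1+2*s) := by
      rw [Real.rpow_add hr', two_mul s, Real.rpow_add hr']; ring

lemma wC0_ne_top {r0 μ s K : ℝ} {f : ℝ → ℝ} (hr0 : 0 < r0) (hs : s < μ)
    (hf : ∀ r, r0 ≤ r → |f r| ≤ K * r ^ s) : wC0 r0 μ f ≠ ⊤ := by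
  refine ne_top_of_le_ne_top (b := ENNReal.ofReal (K^2 * r0 ^ (-2*μ+2*s))) ENNReal.ofReal_ne_top ?_
  refine iSup₂_le fun r hr => ENNReal.ofReal_le_ofReal ?_
  have hr' : 0 < r := hr0.trans_le hr
  have h1 : (f r)^2 ≤ (K * r ^ s)^2 := by
    rw [← sq_abs]; exact pow_le_pow_left₀ (abs_nonneg _) (hf r hr) 2
  calc r ^ (-2*μ) * (f r)^2 ≤ r ^ (-2*μ) * (K * r ^ s)^2 := by gcongr
    _ = K^2 * r ^ (-2*μ+2*s) := by
      rw [Real.rpow_add hr', two_mul s, Real.rpow_add hr']; ring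
    _ ≤ K^2 * r0 ^ (-2*μ+2*s) := by
      gcongr 1
      · exact Real.rpow_le_rpow_of_nonpos hr0 hr (by linarith)

/-- The weight `r ^ (-2 μ)` blows up at infinity when `μ < 0`, so a finite `C⁰_μ` norm gives decay. -/
lemma tendsto_zero_of_wC0 {r0 μ : ℝ} {f : ℝ → ℝ} (hr0 : 0 < r0) (hμ : μ < 0)
    (hf : wC0 r0 μ f ≠ ⊤) : Filter.Tendsto f Filter.atTop (nhds 0) := by
  have hlim : Filter.Tendsto (fun r : ℝ => (wC0 r0 μ f).toReal * r ^ (-(-2*μ)))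
      Filter.atTop (nhds 0) := by
    simpa using (tendsto_rpow_neg_atTop (y := -2*μ) (by linarith)).const_mul (wC0 r0 μ f).toReal
  have hsq : Filter.Tendsto (fun r => (f r)^2) Filter.atTop (nhds 0) := by
    refine tendsto_of_tendsto_of_tendsto_of_le_of_le' tendsto_const_nhds hlim
      (Filter.Eventually.of_forall fun r => sq_nonneg _) ?_
    filter_upwards [Filter.eventually_ge_atTop r0] with r hr
    have hr' : 0 < r := hr0.trans_le hr
    have h1 : ENNReal.ofReal (r ^ (-2*μ) * (f r)^2) ≤ wC0 r0 μ f :=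
      le_iSup₂ (f := fun r (_ : r ∈ Set.Ici r0) => ENNReal.ofReal (r ^ (-2*μ) * (f r)^2)) r hr
    have h2 := (ENNReal.ofReal_le_iff_le_toReal hf).1 h1
    rw [Real.rpow_neg hr'.le, ← div_eq_mul_inv, le_div_iff₀ (Real.rpow_pos_of_pos hr' _)]
    linarith
  have h3 := hsq.sqrt
  simp only [Real.sqrt_sq_eq_abs, Real.sqrt_zero] at h3
  exact (tendsto_zero_iff_abs_tendsto_zero f).2 h3

lemma eq_of_hasDerivWithinAt_zero {r0 : ℝ} {f : ℝ → ℝ}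
    (hf : ∀ r, r0 ≤ r → HasDerivWithinAt f 0 (Set.Ici r0) r) : ∀ r, r0 ≤ r → f r = f r0 := by
  intro r hr
  refine constant_of_has_deriv_right_zero (a := r0) (b := r) (fun x hx =>
    ((hf x hx.1).continuousWithinAt).mono Set.Icc_subset_Ici_self) (fun x hx =>
    (hf x hx.1).mono (Set.Ici_subset_Ici.2 hx.1)) r ⟨hr, le_rfl⟩

lemma hasDerivAt_sol {m0 r : ℝ} (hm0 : 0 < m0) (hr : 2*m0 < r) :
    HasDerivAt (sol m0) (-(2*m0)/(r*(r-2*m0))) r := by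
  have h1 : r ≠ 0 := by linarith
  have h2 : r - 2*m0 ≠ 0 := by linarith
  have := (Real.hasDerivAt_log h1).sub (((hasDerivAt_id r).sub_const (2*m0)).log h2)
  refine (this.congr_deriv ?_)
  simp only [id]
  field_simp
  ring

lemma hasDerivAt_dsol {m0 r : ℝ} (hm0 : 0 < m0) (hr : 2*m0 < r) :
    HasDerivAt (fun r => -(2*m0)/(r*(r-2*m0))) (2*m0*(2*(r-m0))/(r*(r-2*m0))^2) r := by
  have h1 : r ≠ 0 := by linarith
  have h2 : r - 2*m0 ≠ 0 := by linarith
  have := (hasDerivAt_const r (-(2*m0))).div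
    ((hasDerivAt_id r).mul ((hasDerivAt_id r).sub_const (2*m0))) (mul_ne_zero h1 h2)
  refine (this.congr_deriv ?_)
  simp only [id, Pi.mul_apply]
  congr 1
  ring

lemma d1_eq {r0 a r : ℝ} {f : ℝ → ℝ} (hr : r0 ≤ r) (hf : HasDerivAt f a r) : d1 r0 f r = a :=
  hf.hasDerivWithinAt.derivWithin (uniqueDiffOn_Ici r0 r hr)

lemma d1_mul_sol {m0 r0 : ℝ} (hm0 : 0 < m0) (hr0 : 2*m0 < r0) (A : ℝ) {r : ℝ} (hr : r0 ≤ r) :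
    d1 r0 (fun r => A * sol m0 r) r = A * (-(2*m0)/(r*(r-2*m0))) :=
  d1_eq hr ((hasDerivAt_sol hm0 (hr0.trans_le hr)).const_mul A)

lemma d2_mul_sol {m0 r0 : ℝ} (hm0 : 0 < m0) (hr0 : 2*m0 < r0) (A : ℝ) {r : ℝ} (hr : r0 ≤ r) :
    d2 r0 (fun r => A * sol m0 r) r = A * (2*m0*(2*(r-m0))/(r*(r-2*m0))^2) := by
  have h1 : d2 r0 (fun r => A * sol m0 r) r
      = d1 r0 (fun r => A * (-(2*m0)/(r*(r-2*m0)))) r :=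
    derivWithin_congr (fun x hx => d1_mul_sol hm0 hr0 A hx) (d1_mul_sol hm0 hr0 A hr)
  rw [h1]
  exact d1_eq hr ((hasDerivAt_dsol hm0 (hr0.trans_le hr)).const_mul A)

lemma sol_pos {m0 r : ℝ} (hm0 : 0 < m0) (hr : 2*m0 < r) : 0 < sol m0 r :=
  sub_pos.2 (Real.log_lt_log (by linarith) (by linarith))

/-- From `log (1 + x) ≤ x` with `x = 2 m₀ / (r - 2 m₀)`. -/
lemma sol_le {m0 r : ℝ} (hm0 : 0 < m0) (hr : 2*m0 < r) : sol m0 r ≤ 2*m0/(r-2*m0) := by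
  have h2 : 0 < r - 2*m0 := by linarith
  have h1 : 0 < r := by linarith
  unfold sol
  rw [← Real.log_div h1.ne' h2.ne']
  refine (Real.log_le_sub_one_of_pos (div_pos h1 h2)).trans (le_of_eq ?_)
  field_simp
  ring

lemma memH2C2_mul_sol {m0 r0 δ : ℝ} (hm0 : 0 < m0) (hr0 : 2*m0 < r0) (hδ : -1 < δ) (A : ℝ) :
    MemH2C2 r0 δ (fun r => A * sol m0 r) := by
  have hr0' : 0 < r0 := by linarith
  -- `r - 2 m₀ ≥ a r` on `[r₀, ∞)` with this `a`
  obtain ⟨a, ha, hle⟩ : ∃ a : ℝ, 0 < a ∧ ∀ r, r0 ≤ r → a * r ≤ r - 2*m0 := by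
    refine ⟨(r0-2*m0)/r0, div_pos (by linarith) hr0', fun r hr => ?_⟩
    rw [div_mul_eq_mul_div, div_le_iff₀ hr0']
    nlinarith
  have b0 : ∀ r, r0 ≤ r → |A * sol m0 r| ≤ (|A| * (2*m0/a)) * r ^ (-1 : ℝ) := by
    intro r hr
    have hrp : 0 < r := by linarith
    rw [abs_mul, abs_of_pos (sol_pos hm0 (hr0.trans_le hr)), Real.rpow_neg_one, mul_assoc]
    gcongr
    refine (sol_le hm0 (hr0.trans_le hr)).trans ?_
    rw [← div_eq_mul_inv, div_div]
    have := hle r hr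
    gcongr
  have b1 : ∀ r, r0 ≤ r →
      |d1 r0 (fun r => A * sol m0 r) r| ≤ (|A| * (2*m0/a)) * r ^ (-2 : ℝ) := by
    intro r hr
    have hrp : 0 < r := by linarith
    have h2 : 0 < r - 2*m0 := by linarith
    rw [d1_mul_sol hm0 hr0 A hr, abs_mul, Real.rpow_neg hrp.le, Real.rpow_two, mul_assoc, neg_div,
      abs_neg, abs_of_pos (show 0 < 2*m0/(r*(r-2*m0)) by positivity)]
    gcongr
    rw [← div_eq_mul_inv, div_div]
    have := mul_le_mul_of_nonneg_left (hle r hr) hrp.le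
    gcongr 2*m0/?_
    linarith
  have b2 : ∀ r, r0 ≤ r →
      |d2 r0 (fun r => A * sol m0 r) r| ≤ (|A| * (2*m0*2/a^2)) * r ^ (-3 : ℝ) := by
    intro r hr
    have hrp : 0 < r := by linarith
    have h2 : 0 < r - 2*m0 := by linarith
    have h3 : 0 < r - m0 := by linarith
    rw [d2_mul_sol hm0 hr0 A hr, abs_mul, Real.rpow_neg hrp.le, mul_assoc |A|,
      show (3:ℝ) = ((3:ℕ):ℝ) by norm_num, Real.rpow_natCast,
      abs_of_pos (show 0 < 2*m0*(2*(r-m0))/(r*(r-2*m0))^2 by positivity)]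
    gcongr
    rw [← div_eq_mul_inv, div_div]
    have hq : (a*r)^2 ≤ (r-2*m0)^2 := pow_le_pow_left₀ (by positivity) (hle r hr) 2
    calc 2*m0*(2*(r-m0))/(r*(r-2*m0))^2 ≤ 2*m0*(2*r)/(r^2*(a*r)^2) := by
          rw [mul_pow]
          gcongr
          linarith
      _ = 2*m0*2/(a^2*r^3) := by field_simp
  refine ⟨?_, wL2_ne_top hr0' hδ b0, wL2_ne_top hr0' (by linarith) b1,
    wL2_ne_top hr0' (by linarith) b2, wC0_ne_top hr0' hδ b0, wC0_ne_top hr0' (by linarith) b1,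
    wC0_ne_top hr0' (by linarith) b2⟩
  refine contDiffOn_const.mul (ContDiffOn.sub (contDiffOn_id.log fun r hr => ?_)
    ((contDiffOn_id.sub contDiffOn_const).log fun r hr => ?_))
  · have : r0 ≤ r := hr
    simp only [id]; linarith
  · have : r0 ≤ r := hr
    simp only [id]; linarith

lemma exists_affine_of_ode {m0 r0 : ℝ} {c : ℝ → ℝ} (hm0 : 0 < m0) (hr0 : 2*m0 < r0)
    (hc : ContDiffOn ℝ 2 c (Set.Ici r0))
    (hode : ∀ r, r0 ≤ r → r*(r - 2*m0) * d2 r0 c r + 2*(r - m0) * d1 r0 c r = 0) :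
    ∃ D k : ℝ, ∀ r, r0 ≤ r → c r = D + k * sol m0 r := by
  have hc1 : ∀ r, r0 ≤ r → HasDerivWithinAt c (d1 r0 c r) (Set.Ici r0) r := fun r hr =>
    (hc.differentiableOn (by norm_num) r hr).hasDerivWithinAt
  have hc2 : ∀ r, r0 ≤ r → HasDerivWithinAt (d1 r0 c) (d2 r0 c r) (Set.Ici r0) r := fun r hr =>
    ((hc.derivWithin (m := 1) (uniqueDiffOn_Ici r0) (by norm_num)).differentiableOn
      (by norm_num) r hr).hasDerivWithinAt
  have hP := eq_of_hasDerivWithinAt_zero (r0 := r0) (f := fun r => r*(r-2*m0) * d1 r0 c r) (by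
    intro r hr
    have h1 : HasDerivAt (fun r : ℝ => r*(r-2*m0)) (2*(r-m0)) r := by
      refine ((hasDerivAt_id r).mul ((hasDerivAt_id r).sub_const (2*m0))).congr_deriv ?_
      simp only [id]; ring
    refine (h1.hasDerivWithinAt.mul (hc2 r hr)).congr_deriv ?_
    linarith [hode r hr])
  set B := r0*(r0-2*m0) * d1 r0 c r0 with hB
  have hQ := eq_of_hasDerivWithinAt_zero (r0 := r0) (f := fun r => c r + B/(2*m0) * sol m0 r) (by
    intro r hr
    have h1 : r ≠ 0 := by linarith
    have h2 : r - 2*m0 ≠ 0 := by linarith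
    refine ((hc1 r hr).add ((hasDerivAt_sol hm0
      (hr0.trans_le hr)).const_mul (B/(2*m0))).hasDerivWithinAt).congr_deriv ?_
    have h3 : r*(r-2*m0) * d1 r0 c r = B := hP r hr
    rw [← h3]
    field_simp
    ring)
  exact ⟨c r0 + B/(2*m0) * sol m0 r0, -(B/(2*m0)), fun r hr => by
    linear_combination hQ r hr⟩

lemma tendsto_sol {m0 : ℝ} (hm0 : 0 < m0) :
    Filter.Tendsto (sol m0) Filter.atTop (nhds 0) := by
  have h1 : Filter.Tendsto (fun r : ℝ => 2*m0/(r-2*m0)) Filter.atTop (nhds 0) :=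
    tendsto_const_nhds.div_atTop (Filter.tendsto_atTop_add_const_right _ _ Filter.tendsto_id)
  refine tendsto_of_tendsto_of_tendsto_of_le_of_le' tendsto_const_nhds h1 ?_ ?_
  · filter_upwards [Filter.eventually_gt_atTop (2*m0)] with r hr using (sol_pos hm0 hr).le
  · filter_upwards [Filter.eventually_gt_atTop (2*m0)] with r hr using sol_le hm0 hr

theorem stmt11 (m0 r0 δ : ℝ) (hm0 : 0 < m0) (hr0 : 2*m0 < r0)
    (hδ1 : -1 < δ) (hδ2 : δ < -(1/2))
    (h : ℝ) :
    ∃ c : ℝ → ℝ,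
      (MemH2C2 r0 δ c ∧
        (∀ r, r0 ≤ r →
          r*(r - 2*m0) * d2 r0 c r + 2*(r - m0) * d1 r0 c r = 0) ∧
        2 * Real.sqrt (r0*(r0 - 2*m0)) * c r0 = h) ∧
      ∀ c₂ : ℝ → ℝ,
        (MemH2C2 r0 δ c₂ ∧
          (∀ r, r0 ≤ r →
            r*(r - 2*m0) * d2 r0 c₂ r + 2*(r - m0) * d1 r0 c₂ r = 0) ∧
          2 * Real.sqrt (r0*(r0 - 2*m0)) * c₂ r0 = h) →
        ∀ r, r0 ≤ r → c₂ r = c r := by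
  have hr0' : 0 < r0 := by linarith
  have hu : 0 < sol m0 r0 := sol_pos hm0 hr0
  have hS : 0 < Real.sqrt (r0*(r0 - 2*m0)) :=
    Real.sqrt_pos.2 (mul_pos hr0' (by linarith))
  set S := Real.sqrt (r0*(r0 - 2*m0))
  refine ⟨fun r => h/(2*S*sol m0 r0) * sol m0 r,
    ⟨memH2C2_mul_sol hm0 hr0 hδ1 _, fun r hr => ?_, ?_⟩, ?_⟩
  · have h1 : r ≠ 0 := by linarith
    have h2 : r - 2*m0 ≠ 0 := by linarith
    rw [d1_mul_sol hm0 hr0 _ hr, d2_mul_sol hm0 hr0 _ hr]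
    field_simp
    ring
  · field_simp
  · rintro c ⟨hmem, hode, hbc⟩ r hr
    obtain ⟨D, k, hDk⟩ := exists_affine_of_ode hm0 hr0 hmem.1 hode
    have hlim : Filter.Tendsto c Filter.atTop (nhds D) := by
      have h1 : Filter.Tendsto (fun r => D + k * sol m0 r) Filter.atTop (nhds D) := by
        simpa using ((tendsto_sol hm0).const_mul k).const_add D
      refine h1.congr' ?_
      filter_upwards [Filter.eventually_ge_atTop r0] with r hr using (hDk r hr).symm
    have hD : D = 0 := tendsto_nhds_unique hlim
      (tendsto_zero_of_wC0 hr0' (by linarith) hmem.2.2.2.2.1)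
    rw [hDk r0 le_rfl, hD] at hbc
    rw [hDk r hr, hD, ← hbc]
    field_simp
    ring
end

section
/- There exists a constant C > 0 depending only on r0, m0 and δ such that for every integer ℓ ≥ 1 and every function c belonging to H²_δ ∩ C²_δ that satisfies r(r−2m0)·c''(r) + 2(r−m0)·c'(r) − ℓ(ℓ+1)·c(r) = 0 for all r ≥ r0, the function c̄ defined by c̄(r) := ∫_{r0}^r c(s) ds satisfies ‖c̄‖²_{L²_{δ+1}} + ‖c̄‖²_{C⁰_{δ+1}} ≤ (C/(1+ℓ(ℓ+1))²)·( ‖c'‖²_{L²_{δ-1}} + ‖c'‖²_{C⁰_{δ-1}} ). -/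
/-!
With `P r = r (r - 2 m0)` and `L = l (l + 1)`, the equation reads `(P c')' = L c`. Integrating from
`r0` to `r` gives the exact formula `L ∫_{r0}^r c = P(r) c'(r) - P(r0) c'(r0)`
(`mul_integral_eq_sub`). As `0 ≤ P ≤ r²` and `L ≥ 2`, this bounds `(∫_{r0}^r c)²` pointwise by
`(9/2) (1 + L)⁻² (r⁴ c'(r)² + r0⁴ c'(r0)²)` (`sq_integral_le`). The weight of index `δ + 1` times
`r⁴` is the weight of index `δ - 1`, so the first term produces the norms of `c'`. The boundary term
is a constant; because `δ > -1`, constants have finite norms of index `δ + 1`, and `r0⁴ c'(r0)²` is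
controlled by the value at `r0` in the supremum norm of `c'`.
-/

open Set MeasureTheory
open scoped ENNReal

/-- The equation in divergence form `(r (r - 2 m0) c')' = L c`, integrated from `r0` to `r`. -/
lemma mul_integral_eq_sub {m0 r0 L : ℝ} {c : ℝ → ℝ} (hc : ContDiffOn ℝ 2 c (Ici r0))
    (heq : ∀ r, r0 ≤ r →
      r * (r - 2*m0) * d2 r0 c r + 2*(r - m0) * d1 r0 c r - L * c r = 0)
    {r : ℝ} (hr : r0 ≤ r) :
    L * ∫ s in r0..r, c s = r * (r - 2*m0) * d1 r0 c r - r0 * (r0 - 2*m0) * d1 r0 c r0 := by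
  have hd : DifferentiableOn ℝ (d1 r0 c) (Ici r0) :=
    (hc.derivWithin (uniqueDiffOn_Ici r0) (m := 1) (by norm_num)).differentiableOn (by norm_num)
  rw [← intervalIntegral.integral_const_mul]
  refine intervalIntegral.integral_eq_sub_of_hasDeriv_right
    (f := fun x => x * (x - 2*m0) * d1 r0 c x) ?_ ?_ ?_
  · rw [uIcc_of_le hr]
    have := hd.continuousOn.mono (Icc_subset_Ici_self : Icc r0 r ⊆ Ici r0)
    fun_prop
  · intro x hx
    rw [min_eq_left hr] at hx
    have hx0 : r0 ≤ x := hx.1.le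
    have h1 : HasDerivWithinAt (d1 r0 c) (d2 r0 c x) (Ioi x) x :=
      (hd x hx0).hasDerivWithinAt.mono fun y hy => hx0.trans (le_of_lt hy)
    have h2 : HasDerivAt (fun x : ℝ => x * (x - 2*m0)) (2 * (x - m0)) x := by
      refine ((hasDerivAt_id x).mul ((hasDerivAt_id x).sub_const (2*m0))).congr_deriv ?_
      simp only [id]; ring
    refine (h2.hasDerivWithinAt.mul h1).congr_deriv ?_
    linarith [heq x hx0]
  · apply ContinuousOn.intervalIntegrable
    rw [uIcc_of_le hr]
    exact continuousOn_const.mul (hc.continuousOn.mono Icc_subset_Ici_self)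

lemma sq_integral_le {m0 r0 L : ℝ} (hm0 : 0 < m0) (hr0 : 2*m0 < r0) (hL : 2 ≤ L) {c : ℝ → ℝ}
    (hc : ContDiffOn ℝ 2 c (Ici r0))
    (heq : ∀ r, r0 ≤ r →
      r * (r - 2*m0) * d2 r0 c r + 2*(r - m0) * d1 r0 c r - L * c r = 0)
    {r : ℝ} (hr : r0 ≤ r) :
    (∫ s in r0..r, c s)^2 ≤
      (9/2) / (1 + L)^2 * (r^4 * (d1 r0 c r)^2 + r0^4 * (d1 r0 c r0)^2) := by
  have h := mul_integral_eq_sub hc heq hr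
  set I := ∫ s in r0..r, c s
  have key : ∀ x, r0 ≤ x → ∀ y : ℝ, (x * (x - 2*m0) * y)^2 ≤ x^4 * y^2 := by
    intro x hx y
    have hP : (x * (x - 2*m0))^2 ≤ (x^2)^2 :=
      pow_le_pow_left₀ (mul_nonneg (by linarith) (by linarith)) (by nlinarith) 2
    nlinarith [mul_le_mul_of_nonneg_right hP (sq_nonneg y)]
  have h1 := key r hr (d1 r0 c r)
  have h2 := key r0 le_rfl (d1 r0 c r0)
  have h3 : (L * I)^2 ≤ 2 * (r^4 * (d1 r0 c r)^2 + r0^4 * (d1 r0 c r0)^2) := by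
    rw [h]
    nlinarith [sq_nonneg (r * (r - 2*m0) * d1 r0 c r + r0 * (r0 - 2*m0) * d1 r0 c r0)]
  -- `L ≥ 2` gives `1 + L ≤ (3/2) L`, whence the constant `2 * (3/2)² = 9/2`.
  have h4 : (1 + L)^2 ≤ 9/4 * L^2 := by nlinarith
  rw [div_mul_eq_mul_div, le_div_iff₀ (by positivity)]
  nlinarith [mul_le_mul_of_nonneg_left h4 (sq_nonneg I)]

/-- The pointwise bound with a weight `r ^ e`, stated in `ℝ≥0∞` so that it can be integrated or
maximised over `r`. -/
lemma ofReal_weight_mul_le {e f r I k y D : ℝ} (hr : 0 < r) (hf : f = e + 4) (hk : 0 ≤ k)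
    (h : I^2 ≤ k * (r^4 * y^2 + D)) :
    ENNReal.ofReal (r^e * I^2) ≤ ENNReal.ofReal k *
      (ENNReal.ofReal (r^f * y^2) + ENNReal.ofReal (r^e * D)) := by
  have he : 0 ≤ r^e := (Real.rpow_pos_of_pos hr e).le
  have hfr : r^f = r^e * r^4 := by rw [hf, Real.rpow_add hr]; norm_cast
  calc ENNReal.ofReal (r^e * I^2)
      ≤ ENNReal.ofReal (k * (r^f * y^2 + r^e * D)) := by
        apply ENNReal.ofReal_le_ofReal
        rw [hfr]
        nlinarith [mul_le_mul_of_nonneg_left h he]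
    _ ≤ _ := by
        rw [ENNReal.ofReal_mul hk]
        gcongr
        exact ENNReal.ofReal_add_le

/-- The weighted `L²` norm of a constant, which is finite as the weight index `μ` is positive. -/
lemma lintegral_weight_const {r0 μ D : ℝ} (hr0 : 0 < r0) (hμ : 0 < μ) :
    ∫⁻ r in Ioi r0, ENNReal.ofReal (r^(-2*μ-1) * D) =
      ENNReal.ofReal (1 / (2*μ)) * ENNReal.ofReal (r0^(-2*μ) * D) := by
  have hw : ∀ r ∈ Ioi r0, 0 ≤ r^(-2*μ-1) := fun r hr =>
    (Real.rpow_pos_of_pos (hr0.trans hr) _).le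
  rw [setLIntegral_congr_fun (g := fun r => ENNReal.ofReal (r^(-2*μ-1)) * ENNReal.ofReal D)
      measurableSet_Ioi fun r hr => ENNReal.ofReal_mul (hw r hr),
    lintegral_mul_const' _ _ ENNReal.ofReal_ne_top,
    ← ofReal_integral_eq_lintegral_ofReal (integrableOn_Ioi_rpow_of_lt (by linarith) hr0)
      ((ae_restrict_iff' measurableSet_Ioi).2 (ae_of_all _ hw)),
    integral_Ioi_rpow_of_lt (by linarith) hr0,
    ENNReal.ofReal_mul (Real.rpow_pos_of_pos hr0 _).le, ← mul_assoc,
    ← ENNReal.ofReal_mul (by positivity : 0 ≤ 1 / (2*μ)), show -2*μ-1+1 = -2*μ by ring]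
  congr 2
  rw [neg_mul, neg_div_neg_eq]
  ring

theorem stmt13 (m0 r0 δ : ℝ) (hm0 : 0 < m0) (hr0 : 2*m0 < r0)
    (hδ1 : -1 < δ) (hδ2 : δ < -(1/2)) :
    ∃ C : ℝ, 0 < C ∧ ∀ (l : ℤ), 1 ≤ l →
      ∀ (c : ℝ → ℝ), MemH2C2 r0 δ c →
        (∀ r, r0 ≤ r →
          r*(r - 2*m0) * d2 r0 c r + 2*(r - m0) * d1 r0 c r
            - (l:ℝ)*((l:ℝ)+1) * c r = 0) →
        wL2 r0 (δ+1) (fun r => ∫ s in r0..r, c s)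
          + wC0 r0 (δ+1) (fun r => ∫ s in r0..r, c s)
        ≤ (ENNReal.ofReal C / (ENNReal.ofReal (1 + (l:ℝ)*((l:ℝ)+1)))^2) *
            (wL2 r0 (δ-1) (d1 r0 c) + wC0 r0 (δ-1) (d1 r0 c)) := by
  have hr0p : 0 < r0 := by linarith
  have hμ : 0 < δ + 1 := by linarith
  set q : ℝ := 1 / (2*(δ+1)) with hq
  have hqp : 0 < q := by positivity
  refine ⟨9/2 * (q + 3), by positivity, ?_⟩
  intro l hl c hc heq
  have hl' : (1:ℝ) ≤ l := by exact_mod_cast hl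
  set L : ℝ := (l:ℝ)*((l:ℝ)+1)
  have hL : 2 ≤ L := by simp only [L]; nlinarith
  set k : ℝ := (9/2) / (1 + L)^2 with hk
  have hkp : 0 ≤ k := by positivity
  set D : ℝ := r0^4 * (d1 r0 c r0)^2 with hD
  have hpt : ∀ r, r0 ≤ r → (∫ s in r0..r, c s)^2 ≤ k * (r^4 * (d1 r0 c r)^2 + D) :=
    fun r hr => sq_integral_le hm0 hr0 hL hc.1 heq hr
  set A := wL2 r0 (δ-1) (d1 r0 c) with hA
  set B := wC0 r0 (δ-1) (d1 r0 c) with hB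
  have hBr : ∀ r, r0 ≤ r → ENNReal.ofReal (r^(-2*(δ-1)) * (d1 r0 c r)^2) ≤ B := fun r hr =>
    le_iSup₂ (f := fun r (_ : r ∈ Ici r0) =>
      ENNReal.ofReal (r^(-2*(δ-1)) * (d1 r0 c r)^2)) r hr
  have hDB : ENNReal.ofReal (r0^(-2*(δ+1)) * D) ≤ B := by
    refine le_of_eq_of_le ?_ (hBr r0 le_rfl)
    rw [hD, ← mul_assoc, show -2*(δ-1) = -2*(δ+1) + (4:ℕ) by push_cast; ring,
      Real.rpow_add_natCast hr0p.ne']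
  have h1 : wL2 r0 (δ+1) (fun r => ∫ s in r0..r, c s) ≤
      ENNReal.ofReal k * (A + ENNReal.ofReal q * B) := by
    calc wL2 r0 (δ+1) (fun r => ∫ s in r0..r, c s)
        ≤ ∫⁻ r in Ioi r0, ENNReal.ofReal k *
            (ENNReal.ofReal (r^(-2*(δ-1)-1) * (d1 r0 c r)^2)
              + ENNReal.ofReal (r^(-2*(δ+1)-1) * D)) :=
          setLIntegral_mono' measurableSet_Ioi fun r hr =>
            ofReal_weight_mul_le (hr0p.trans hr) (by ring) hkp (hpt r (le_of_lt hr))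
      _ = ENNReal.ofReal k * (A + ENNReal.ofReal q * ENNReal.ofReal (r0^(-2*(δ+1)) * D)) := by
          rw [lintegral_const_mul' _ _ ENNReal.ofReal_ne_top,
            lintegral_add_right _ (by fun_prop), lintegral_weight_const hr0p hμ]
          rfl
      _ ≤ _ := by gcongr
  have h2 : wC0 r0 (δ+1) (fun r => ∫ s in r0..r, c s) ≤ ENNReal.ofReal k * (B + B) := by
    refine iSup₂_le fun r hr => ?_
    have hr' : r0 ≤ r := hr
    refine (ofReal_weight_mul_le (f := -2*(δ-1)) (hr0p.trans_le hr') (by ring) hkp (hpt r hr')).trans ?_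
    gcongr
    · exact hBr r hr'
    · refine (ENNReal.ofReal_le_ofReal ?_).trans hDB
      exact mul_le_mul_of_nonneg_right
        (Real.rpow_le_rpow_of_nonpos hr0p hr' (by linarith)) (by positivity)
  have hC : ENNReal.ofReal (9/2 * (q + 3)) / (ENNReal.ofReal (1 + L))^2 =
      ENNReal.ofReal k * (ENNReal.ofReal q + 3) := by
    rw [← ENNReal.ofReal_pow (by positivity), ← ENNReal.ofReal_div_of_pos (by positivity),
      show (3 : ℝ≥0∞) = ENNReal.ofReal 3 by simp, ← ENNReal.ofReal_add hqp.le (by norm_num),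
      ← ENNReal.ofReal_mul hkp, hk]
    congr 1
    ring
  rw [hC]
  calc _ ≤ ENNReal.ofReal k * (A + ENNReal.ofReal q * B) + ENNReal.ofReal k * (B + B) :=
        add_le_add h1 h2
    _ = ENNReal.ofReal k * (A + (ENNReal.ofReal q + 2) * B) := by ring
    _ ≤ ENNReal.ofReal k * ((ENNReal.ofReal q + 3) * A + (ENNReal.ofReal q + 3) * B) := by
        gcongr
        · exact le_mul_of_one_le_left (zero_le) (le_add_left (by norm_num))
        · norm_num
    _ = _ := by ring
end

section
/- There exists a constant C > 0 depending only on r0 and δ such that for every continuously differentiable function f : [r0, ∞) → ℝ with ‖f‖_{C⁰_δ} < ∞ and ‖f'‖_{C⁰_{δ-1}} < ∞, the function h defined by h(r) := f'(r) − (2/r0)·f(r) satisfies ‖f‖_{L²_{δ-1}} ≤ C·‖h‖_{L²_{δ-1}} and ‖f‖_{C⁰_δ} ≤ C·‖h‖_{C⁰_δ}. -/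
/-!
With `a = 2 / r0` and `h = f' - a f`, for every weight exponent `p ≥ 0` the function `g = r ^ p f ^ 2`
satisfies the differential inequality `g' ≥ a g - r ^ p h ^ 2 / a` (`weighted_ineq`): the weight is
nondecreasing, and `2 f h ≥ -a f ^ 2 - h ^ 2 / a`.  The inequality `q' ≥ a q` forces exponential growth as
soon as `q` is positive somewhere, so a `q` with at most linear growth is nonpositive
(`nonpos_of_growth`).

For the `C⁰` bound this is applied to `q = r ^ (-2δ) f ^ 2 - ‖h‖² / a ^ 2`.  For the `L²` bound the
weight is `r ^ (1-2δ)`, and `q = g - (1/a) ∫_r^∞ s ^ (1-2δ) h ^ 2 ds`; the growth hypothesis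
`‖f‖_{C⁰_δ} < ∞` gives `q = O(r)`, hence `q ≤ 0`, and integrating `q' ≥ a g` yields
`a ∫ g ≤ -q(r0) ≤ ‖h‖² / a`.  Both bounds hold with `C = 1 / a = r0 / 2`.
-/

open Set MeasureTheory
open scoped ENNReal

lemma monotoneOn_of_hasDerivAt_nonneg_Ici {r0 : ℝ} {q q' : ℝ → ℝ}
    (hc : ContinuousOn q (Ici r0)) (hd : ∀ r, r0 < r → HasDerivAt q (q' r) r)
    (hq : ∀ r, r0 < r → 0 ≤ q' r) : MonotoneOn q (Ici r0) := by
  refine monotoneOn_of_deriv_nonneg (convex_Ici r0) hc ?_ ?_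
  · intro x hx
    rw [interior_Ici] at hx
    exact (hd x hx).differentiableAt.differentiableWithinAt
  · intro x hx
    rw [interior_Ici] at hx
    rw [(hd x hx).deriv]
    exact hq x hx

/-- A function with `q' ≥ a q` and at most linear growth is nonpositive: `exp (-a r) q` is
nondecreasing, and it is bounded above by a function tending to `0`. -/
lemma nonpos_of_growth {r0 a B : ℝ} (ha : 0 < a) {q q' : ℝ → ℝ}
    (hc : ContinuousOn q (Ici r0)) (hd : ∀ r, r0 < r → HasDerivAt q (q' r) r)
    (hq : ∀ r, r0 < r → a * q r ≤ q' r) (hB : ∀ r, r0 ≤ r → q r ≤ B * r) :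
    ∀ r, r0 ≤ r → q r ≤ 0 := by
  intro r hr
  have hmono : MonotoneOn (fun s => Real.exp (-a * s) * q s) (Ici r0) := by
    refine monotoneOn_of_hasDerivAt_nonneg_Ici
      (q' := fun s => Real.exp (-a * s) * (-a) * q s + Real.exp (-a * s) * q' s) ?_ ?_ ?_
    · exact (by fun_prop : Continuous fun s : ℝ => Real.exp (-a * s)).continuousOn.mul hc
    · intro s hs
      have h1 : HasDerivAt (fun s : ℝ => Real.exp (-a * s)) (Real.exp (-a * s) * (-a)) s := by
        simpa using ((hasDerivAt_id s).const_mul (-a)).exp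
      exact h1.mul (hd s hs)
    · intro s hs
      have := mul_nonneg (Real.exp_pos (-a * s)).le (sub_nonneg.2 (hq s hs))
      linarith
  have hlim : Filter.Tendsto (fun s : ℝ => B * (s * Real.exp (-a * s))) Filter.atTop (nhds 0) := by
    have h1 := Real.tendsto_pow_mul_exp_neg_atTop_nhds_zero 1
    have h2 : Filter.Tendsto (fun s : ℝ => a * s) Filter.atTop Filter.atTop :=
      Filter.tendsto_id.const_mul_atTop ha
    have h3 := (h1.comp h2).const_mul (B / a)
    rw [mul_zero] at h3
    refine h3.congr fun s => ?_
    simp only [Function.comp, pow_one, neg_mul]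
    field_simp
  have hle : Real.exp (-a * r) * q r ≤ 0 := by
    refine ge_of_tendsto hlim ?_
    filter_upwards [Filter.eventually_ge_atTop r] with s hs
    have hs0 : r0 ≤ s := hr.trans hs
    have h1 := hmono (mem_Ici.2 hr) (mem_Ici.2 hs0) hs
    have h2 := mul_le_mul_of_nonneg_left (hB s hs0) (Real.exp_pos (-a * s)).le
    dsimp only at h1
    linarith
  exact nonpos_of_mul_nonpos_right hle (Real.exp_pos _)

/-- The weighted energy inequality `(r ^ p f ^ 2)' ≥ a r ^ p f ^ 2 - r ^ p (f' - a f) ^ 2 / a`. -/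
lemma weighted_ineq {r a p y y' : ℝ} (hr : 0 < r) (ha : 0 < a) (hp : 0 ≤ p) :
    a * (r ^ p * y ^ 2) - r ^ p * (y' - a * y) ^ 2 / a
      ≤ p * r ^ (p - 1) * y ^ 2 + r ^ p * (2 * y * y') := by
  have h1 : 0 ≤ p * r ^ (p - 1) * y ^ 2 := by positivity
  -- The difference of the `r ^ p` terms is `r ^ p * y' ^ 2 / a`.
  have h2 : r ^ p * (2 * y * y') - (a * (r ^ p * y ^ 2) - r ^ p * (y' - a * y) ^ 2 / a)
      = r ^ p * y' ^ 2 / a := by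
    field_simp
    ring
  have h3 : 0 ≤ r ^ p * y' ^ 2 / a := by positivity
  linarith

lemma weighted_hasDerivAt {r p y' : ℝ} {f : ℝ → ℝ} (hr : 0 < r) (hf : HasDerivAt f y' r) :
    HasDerivAt (fun s => s ^ p * f s ^ 2)
      (p * r ^ (p - 1) * f r ^ 2 + r ^ p * (2 * f r * y')) r := by
  have h := (Real.hasDerivAt_rpow_const (p := p) (Or.inl hr.ne')).mul (hf.pow 2)
  refine h.congr_deriv ?_
  simp

lemma weighted_continuousOn {r0 p : ℝ} {f : ℝ → ℝ} (hr0 : 0 < r0)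
    (hf : ContinuousOn f (Ici r0)) : ContinuousOn (fun s => s ^ p * f s ^ 2) (Ici r0) := by
  refine ContinuousOn.mul ?_ (hf.pow 2)
  intro s hs
  exact (Real.continuousAt_rpow_const s p (Or.inl (hr0.trans_le hs).ne')).continuousWithinAt

lemma exists_bound_of_wC0_ne_top {r0 μ : ℝ} {f : ℝ → ℝ} (h : wC0 r0 μ f ≠ ⊤) :
    ∀ r, r0 ≤ r → r ^ (-2*μ) * f r ^ 2 ≤ (wC0 r0 μ f).toReal := by
  intro r hr
  rw [← ENNReal.ofReal_le_iff_le_toReal h]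
  exact le_iSup₂ (f := fun r (_ : r ∈ Ici r0) => ENNReal.ofReal (r ^ (-2*μ) * (f r)^2)) r hr

/-- The `C⁰` estimate for `f' - a f`. The exponent in the weight is only required to be
nonnegative. -/
lemma wC0_estimate {r0 a μ : ℝ} (hr0 : 0 < r0) (ha : 0 < a) (hμ : 0 ≤ -2*μ) {f f' : ℝ → ℝ}
    (hc : ContinuousOn f (Ici r0)) (hd : ∀ r, r0 < r → HasDerivAt f (f' r) r)
    (hf : wC0 r0 μ f ≠ ⊤) :
    wC0 r0 μ f ≤ ENNReal.ofReal ((1/a)^2) * wC0 r0 μ (fun r => f' r - a * f r) := by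
  by_cases hh : wC0 r0 μ (fun r => f' r - a * f r) = ⊤
  · rw [hh, ENNReal.mul_top (by simpa using ha.ne')]
    exact le_top
  have hM := exists_bound_of_wC0_ne_top hh
  set M := (wC0 r0 μ (fun r => f' r - a * f r)).toReal with hMdef
  set B := (wC0 r0 μ f).toReal
  have hB := exists_bound_of_wC0_ne_top hf
  have hB0 : 0 ≤ B := ENNReal.toReal_nonneg
  have hM0 : 0 ≤ M := ENNReal.toReal_nonneg
  have key := nonpos_of_growth (B := B / r0) ha
    (q := fun r => r ^ (-2*μ) * f r ^ 2 - M / a ^ 2)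
    ((weighted_continuousOn hr0 hc).sub continuousOn_const)
    (fun r hr => (weighted_hasDerivAt (hr0.trans hr) (hd r hr)).sub_const _)
    (by
      intro r hr
      have h1 := weighted_ineq (y := f r) (y' := f' r) (hr0.trans hr) ha hμ
      have h2 := div_le_div_of_nonneg_right (hM r hr.le) ha.le
      have h3 : a * (M / a ^ 2) = M / a := by field_simp
      rw [mul_sub, h3]
      linarith)
    (by
      intro r hr
      have h1 := hB r hr
      have h2 : B ≤ B / r0 * r := by
        rw [div_mul_eq_mul_div, le_div_iff₀ hr0]
        gcongr
      have h3 : 0 ≤ M / a ^ 2 := by positivity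
      linarith)
  refine iSup₂_le fun r hr => ?_
  rw [← ENNReal.ofReal_toReal hh, ← ENNReal.ofReal_mul (by positivity)]
  refine ENNReal.ofReal_le_ofReal ?_
  have h1 := key r hr
  have h2 : (1 / a) ^ 2 * M = M / a ^ 2 := by field_simp
  rw [← hMdef, h2]
  linarith

/-- The `L²` estimate for `f' - a f`, with weight `r ^ p`, under the a priori bound
`r ^ p f ^ 2 = O(r)`. -/
lemma weighted_L2_estimate {r0 a p B : ℝ} (hr0 : 0 < r0) (ha : 0 < a) (hp : 0 ≤ p)
    {f f' : ℝ → ℝ} (hc : ContinuousOn f (Ici r0)) (hc' : ContinuousOn f' (Ici r0))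
    (hd : ∀ r, r0 < r → HasDerivAt f (f' r) r)
    (hB : ∀ r, r0 ≤ r → r ^ p * f r ^ 2 ≤ B * r) :
    ∫⁻ r in Ioi r0, ENNReal.ofReal (r ^ p * f r ^ 2) ≤
      ENNReal.ofReal ((1/a)^2) *
        ∫⁻ r in Ioi r0, ENNReal.ofReal (r ^ p * (f' r - a * f r) ^ 2) := by
  by_cases hh : ∫⁻ r in Ioi r0, ENNReal.ofReal (r ^ p * (f' r - a * f r) ^ 2) = ⊤
  · rw [hh, ENNReal.mul_top (by simpa using ha.ne')]
    exact le_top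
  set g : ℝ → ℝ := fun r => r ^ p * f r ^ 2 with hg
  set k : ℝ → ℝ := fun r => r ^ p * (f' r - a * f r) ^ 2 with hk
  have hgc : ContinuousOn g (Ici r0) := weighted_continuousOn hr0 hc
  have hkc : ContinuousOn k (Ici r0) :=
    weighted_continuousOn hr0 (hc'.sub (continuousOn_const.mul hc))
  have hg0 : ∀ r, r0 ≤ r → 0 ≤ g r := fun r hr => by
    have := hr0.trans_le hr
    positivity
  have hk0 : ∀ r, r0 ≤ r → 0 ≤ k r := fun r hr => by
    have := hr0.trans_le hr
    positivity
  have hk0' : 0 ≤ᵐ[volume.restrict (Ioi r0)] k :=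
    (ae_restrict_mem measurableSet_Ioi).mono fun r hr => hk0 r (le_of_lt hr)
  have hg0' : 0 ≤ᵐ[volume.restrict (Ioi r0)] g :=
    (ae_restrict_mem measurableSet_Ioi).mono fun r hr => hg0 r (le_of_lt hr)
  have hki : IntegrableOn k (Ioi r0) :=
    ⟨(hkc.mono Ioi_subset_Ici_self).aestronglyMeasurable measurableSet_Ioi,
      (hasFiniteIntegral_iff_ofReal hk0').2 (lt_top_iff_ne_top.2 hh)⟩
  set H := ∫ r in Ioi r0, k r with hH
  -- Continuous extensions to the whole line make the primitives below differentiable everywhere.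
  have hmax : ∀ {u : ℝ → ℝ}, ContinuousOn u (Ici r0) → Continuous fun r => u (max r0 r) :=
    fun hu => hu.comp_continuous (by fun_prop) fun r => mem_Ici.2 (le_max_left _ _)
  have hprim : ∀ {u : ℝ → ℝ}, ContinuousOn u (Ici r0) → ∀ r, r0 ≤ r →
      HasDerivAt (fun x => ∫ s in r0..x, u (max r0 s)) (u r) r := by
    intro u hu r hr
    have h := (hmax hu).integral_hasStrictDerivAt r0 r
    simpa [max_eq_right hr] using h.hasDerivAt
  have hcongr : ∀ (u : ℝ → ℝ) (r : ℝ), r0 ≤ r →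
      ∫ s in r0..r, u (max r0 s) = ∫ s in r0..r, u s := by
    intro u r hr
    refine intervalIntegral.integral_congr fun s hs => ?_
    rw [uIcc_of_le hr] at hs
    simp [max_eq_right hs.1]
  have hKH : ∀ r, r0 ≤ r → ∫ s in r0..r, k (max r0 s) ≤ H := by
    intro r hr
    rw [hcongr k r hr, intervalIntegral.integral_of_le hr]
    exact setIntegral_mono_set hki hk0' Ioc_subset_Ioi_self.eventuallyLE
  -- `q` is `g` minus the tail integral of `k / a`.
  set q : ℝ → ℝ := fun r => g r + (∫ s in r0..r, k (max r0 s)) / a - H / a with hq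
  set q' : ℝ → ℝ := fun r => (p * r ^ (p - 1) * f r ^ 2 + r ^ p * (2 * f r * f' r)) + k r / a
  have hqd : ∀ r, r0 < r → HasDerivAt q (q' r) r := fun r hr =>
    ((weighted_hasDerivAt (hr0.trans hr) (hd r hr)).add
      ((hprim hkc r hr.le).div_const a)).sub_const _
  have hqc : ContinuousOn q (Ici r0) :=
    (hgc.add fun r hr =>
      ((hprim hkc r hr).div_const a).continuousAt.continuousWithinAt).sub continuousOn_const
  have hqg : ∀ r, r0 ≤ r → q r ≤ g r := by
    intro r hr
    have := div_le_div_of_nonneg_right (hKH r hr) ha.le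
    simp only [hq]
    linarith
  have hqq' : ∀ r, r0 < r → a * g r ≤ q' r := by
    intro r hr
    have := weighted_ineq (y := f r) (y' := f' r) (hr0.trans hr) ha hp
    simp only [q', hk, hg]
    linarith
  have hqneg : ∀ r, r0 ≤ r → q r ≤ 0 :=
    nonpos_of_growth ha hqc hqd
      (fun r hr => (mul_le_mul_of_nonneg_left (hqg r hr.le) ha.le).trans (hqq' r hr))
      (fun r hr => (hqg r hr).trans (hB r hr))
  -- Integrating `q' ≥ a g` from `r0` to `R`.
  have hbound : ∀ R, r0 ≤ R → ∫ s in r0..R, g s ≤ (1 / a) ^ 2 * H := by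
    intro R hR
    have hmono : MonotoneOn (fun r => q r - a * ∫ s in r0..r, g (max r0 s)) (Ici r0) := by
      refine monotoneOn_of_hasDerivAt_nonneg_Ici (q' := fun r => q' r - a * g r) ?_ ?_ ?_
      · exact hqc.sub fun r hr =>
          ((hprim hgc r hr).const_mul a).continuousAt.continuousWithinAt
      · exact fun r hr => (hqd r hr).sub ((hprim hgc r hr.le).const_mul a)
      · exact fun r hr => sub_nonneg.2 (hqq' r hr)
    have h1 := hmono (mem_Ici.2 le_rfl) (mem_Ici.2 hR) hR
    have h2 := hqneg R hR
    have h3 := hg0 r0 le_rfl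
    have h4 : q r0 = g r0 - H / a := by simp [hq]
    simp only [hcongr g R hR, intervalIntegral.integral_same, h4] at h1
    have h5 : a * ∫ s in r0..R, g s ≤ H / a := by linarith
    rw [← le_div_iff₀' ha] at h5
    refine h5.trans_eq ?_
    field_simp
  have hgi : IntegrableOn g (Ioi r0) := by
    refine integrableOn_Ioi_of_intervalIntegral_norm_bounded (l := Filter.atTop) (b := id)
      ((1 / a) ^ 2 * H) r0 ?_ Filter.tendsto_id ?_
    · intro R
      exact ((hgc.mono Icc_subset_Ici_self).integrableOn_Icc).mono_set Ioc_subset_Icc_self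
    · filter_upwards [Filter.eventually_ge_atTop r0] with R hR
      refine le_of_eq_of_le (intervalIntegral.integral_congr fun s hs => ?_) (hbound R hR)
      rw [id, uIcc_of_le hR] at hs
      exact Real.norm_of_nonneg (hg0 s hs.1)
  have hfin : ∫ r in Ioi r0, g r ≤ (1 / a) ^ 2 * H := by
    refine le_of_tendsto (intervalIntegral_tendsto_integral_Ioi r0 hgi Filter.tendsto_id) ?_
    filter_upwards [Filter.eventually_ge_atTop r0] with R hR using hbound R hR
  rw [← ofReal_integral_eq_lintegral_ofReal hgi hg0', ← ofReal_integral_eq_lintegral_ofReal hki hk0',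
    ← ENNReal.ofReal_mul (by positivity)]
  exact ENNReal.ofReal_le_ofReal hfin

theorem stmt14 (m0 r0 δ : ℝ) (hm0 : 0 < m0) (hr0 : 2*m0 < r0)
    (hδ1 : -1 < δ) (hδ2 : δ < -(1/2)) :
    ∃ C : ℝ, 0 < C ∧
      ∀ (f : ℝ → ℝ), ContDiffOn ℝ 1 f (Set.Ici r0) →
        wC0 r0 δ f ≠ ⊤ → wC0 r0 (δ-1) (d1 r0 f) ≠ ⊤ →
        wL2 r0 (δ-1) f
            ≤ ENNReal.ofReal (C^2) *
                wL2 r0 (δ-1) (fun r => d1 r0 f r - (2/r0) * f r) ∧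
        wC0 r0 δ f
            ≤ ENNReal.ofReal (C^2) *
                wC0 r0 δ (fun r => d1 r0 f r - (2/r0) * f r) := by
  have hr : 0 < r0 := by linarith
  have ha : 0 < 2 / r0 := by positivity
  refine ⟨1 / (2 / r0), by positivity, fun f hf hf0 _ => ?_⟩
  have hc : ContinuousOn f (Ici r0) := hf.continuousOn
  have hc' : ContinuousOn (d1 r0 f) (Ici r0) :=
    hf.continuousOn_derivWithin (uniqueDiffOn_Ici r0) le_rfl
  have hd : ∀ r, r0 < r → HasDerivAt f (d1 r0 f r) r := fun r hr =>
    ((hf.differentiableOn one_ne_zero r hr.le).hasDerivWithinAt).hasDerivAt (Ici_mem_nhds hr)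
  refine ⟨?_, wC0_estimate hr ha (by linarith) hc hd hf0⟩
  refine weighted_L2_estimate (B := (wC0 r0 δ f).toReal) hr ha (by linarith) hc hc' hd ?_
  intro r hrr
  have h1 := mul_le_mul_of_nonneg_right (exists_bound_of_wC0_ne_top hf0 r hrr)
    (hr.trans_le hrr).le
  have h2 : r ^ (-2 * (δ - 1) - 1) = r ^ (-2 * δ) * r := by
    rw [← Real.rpow_add_one (hr.trans_le hrr).ne']
    ring_nf
  rw [h2]
  linarith
end

section
/- Let ℓ ≥ 1 be an integer. Let c belong to H²_δ ∩ C²_δ and satisfy r(r−2m0)·c''(r) + 2(r−m0)·c'(r) − ℓ(ℓ+1)·c(r) = 0 for all r ≥ r0, and let β belong to H²_δ ∩ C²_δ with β(r0) = 0. Then for every real number a0 there exists a unique continuously differentiable function a : [r0, ∞) → ℝ with a(r0) = a0 satisfying r(r−2m0)·a'(r) + (r−m0)·a(r) − c(r) = r(r−2m0)·β'(r) + (r−m0)·β(r) for all r ≥ r0; moreover this function a belongs to H²_δ ∩ C²_δ. -/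
/-! Put `u = a - β`. The equation for `a` becomes `r(r-2m0) u' + (r-m0) u = c`, and with
`h = √(r(r-2m0))`, so that `h h' = r - m0`, it reads `(h u)' = c / h`. Hence
`u = (h(r0) a0 + ∫_{r0}^r c/h) / h` is a solution (`exists_solution`), and it is unique because
`h w` is constant for every solution `w` of the homogeneous equation (`homogeneous_eq_zero`).

For the decay, `h ≥ √q r` with `q = 1 - 2m0/r0 > 0`, and `c = O(r^δ)` with `δ < 0`, so `c/h` is
integrable at infinity and `u = O(1/r)`. The equation and its derivative then yield
`u' = O(1/r²)` and `u'' = O(1/r³)` (`decay`). Since `δ > -1`, these bounds put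
`u` in the weighted spaces, and adding `β` keeps it there (`wL2_ne_top_of_close`,
`wC0_ne_top_of_close`). -/

open Set MeasureTheory
open scoped ENNReal

lemma exists_bound_of_wC0 {r0 μ : ℝ} (hr0 : 0 < r0) {f : ℝ → ℝ} (h : wC0 r0 μ f ≠ ⊤) :
    ∃ C, 0 ≤ C ∧ ∀ r, r0 ≤ r → |f r| ≤ C * r ^ μ := by
  refine ⟨√(wC0 r0 μ f).toReal, Real.sqrt_nonneg _, fun r hr => ?_⟩
  have hpos : 0 < r := hr0.trans_le hr
  have h1 : ENNReal.ofReal (r ^ (-2*μ) * (f r)^2) ≤ wC0 r0 μ f :=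
    le_iSup₂ (f := fun r (_ : r ∈ Set.Ici r0) => ENNReal.ofReal (r ^ (-2*μ) * (f r)^2)) r hr
  have h2 := (ENNReal.ofReal_le_iff_le_toReal h).1 h1
  have h3 : r ^ (-2*μ) * (r ^ μ)^2 = 1 := by
    rw [← Real.rpow_natCast (r ^ μ) 2, ← Real.rpow_mul hpos.le, ← Real.rpow_add hpos]
    norm_num
    ring_nf
    simp
  apply abs_le_of_sq_le_sq _ (by positivity)
  rw [mul_pow, Real.sq_sqrt ENNReal.toReal_nonneg]
  have h4 : (0:ℝ) ≤ (r ^ μ)^2 := by positivity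
  calc (f r)^2 = (r ^ (-2*μ) * (r ^ μ)^2) * (f r)^2 := by rw [h3, one_mul]
    _ = (r ^ (-2*μ) * (f r)^2) * (r ^ μ)^2 := by ring
    _ ≤ _ := mul_le_mul_of_nonneg_right h2 h4

lemma weight_sq_le {r p ν K x y : ℝ} (hr : 0 < r) (hxy : |y - x| ≤ K * r ^ ν) :
    r ^ p * y^2 ≤ 2 * (r ^ p * x^2) + 2 * K^2 * r ^ (p + 2*ν) := by
  have h1 : (y - x)^2 ≤ (K * r ^ ν)^2 := sq_le_sq' (by linarith [neg_abs_le (y - x)])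
    ((le_abs_self _).trans hxy)
  have h2 : r ^ (p + 2*ν) = r ^ p * (r ^ ν)^2 := by
    rw [← Real.rpow_natCast (r ^ ν) 2, ← Real.rpow_mul hr.le, ← Real.rpow_add hr]
    norm_num
    ring_nf
  rw [h2]
  have h3 : y^2 ≤ 2 * x^2 + 2 * (K * r ^ ν)^2 := by nlinarith [sq_nonneg (y - 2 * x)]
  have h4 : 0 ≤ r ^ p := by positivity
  nlinarith [mul_le_mul_of_nonneg_left h3 h4]

lemma wC0_ne_top_of_close {r0 μ ν K : ℝ} (hr0 : 0 < r0) (hν : ν ≤ μ) {f g : ℝ → ℝ}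
    (hf : wC0 r0 μ f ≠ ⊤) (hfg : ∀ r, r0 ≤ r → |g r - f r| ≤ K * r ^ ν) :
    wC0 r0 μ g ≠ ⊤ := by
  have hle : wC0 r0 μ g ≤ 2 * wC0 r0 μ f + ENNReal.ofReal (2 * K^2 * r0 ^ (-2*μ + 2*ν)) := by
    refine iSup₂_le fun r hr => ?_
    have hr' : r0 ≤ r := hr
    have hpos : 0 < r := hr0.trans_le hr'
    refine (ENNReal.ofReal_le_ofReal (weight_sq_le hpos (hfg r hr'))).trans ?_
    rw [ENNReal.ofReal_add (by positivity) (by positivity), ENNReal.ofReal_mul (by norm_num)]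
    rw [ENNReal.ofReal_ofNat]
    refine add_le_add (mul_le_mul_right (le_iSup₂ (f := fun r (_ : r ∈ Set.Ici r0) =>
        ENNReal.ofReal (r ^ (-2*μ) * (f r)^2)) r hr) 2) (ENNReal.ofReal_le_ofReal ?_)
    exact mul_le_mul_of_nonneg_left
      (Real.rpow_le_rpow_of_nonpos hr0 hr' (by linarith)) (by positivity)
  refine ne_top_of_le_ne_top ?_ hle
  exact ENNReal.add_ne_top.2 ⟨ENNReal.mul_ne_top (by norm_num) hf, ENNReal.ofReal_ne_top⟩

lemma wL2_ne_top_of_close {r0 μ ν K : ℝ} (hr0 : 0 < r0) (hν : ν < μ) {f g : ℝ → ℝ}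
    (hf : wL2 r0 μ f ≠ ⊤) (hfg : ∀ r, r0 ≤ r → |g r - f r| ≤ K * r ^ ν) :
    wL2 r0 μ g ≠ ⊤ := by
  have hint : IntegrableOn (fun r : ℝ => 2 * K^2 * r ^ (-2*μ-1 + 2*ν)) (Set.Ioi r0) :=
    (integrableOn_Ioi_rpow_of_lt (by linarith) hr0).const_mul _
  have hle : wL2 r0 μ g ≤ 2 * wL2 r0 μ f +
      ∫⁻ r in Set.Ioi r0, ENNReal.ofReal (2 * K^2 * r ^ (-2*μ-1 + 2*ν)) := by
    unfold wL2
    rw [← lintegral_const_mul' _ _ (by norm_num), ← lintegral_add_right']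
    · refine setLIntegral_mono' measurableSet_Ioi fun r hr => ?_
      have hr' : r0 < r := hr
      have hpos : 0 < r := hr0.trans hr'
      refine (ENNReal.ofReal_le_ofReal (weight_sq_le hpos (hfg r hr'.le))).trans ?_
      rw [ENNReal.ofReal_add (by positivity) (by positivity), ENNReal.ofReal_mul (by norm_num)]
      norm_num
    · exact hint.aestronglyMeasurable.aemeasurable.ennreal_ofReal
  refine ne_top_of_le_ne_top ?_ hle
  exact ENNReal.add_ne_top.2 ⟨ENNReal.mul_ne_top (by norm_num) hf, hint.lintegral_lt_top.ne⟩

lemma contDiffOn_succ_of_hasDerivWithinAt {r0 : ℝ} {n : ℕ} {u v : ℝ → ℝ}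
    (hu : ∀ r, r0 ≤ r → HasDerivWithinAt u (v r) (Set.Ici r0) r)
    (hv : ContDiffOn ℝ n v (Set.Ici r0)) : ContDiffOn ℝ (n + 1) u (Set.Ici r0) := by
  rw [contDiffOn_succ_iff_derivWithin (uniqueDiffOn_Ici r0)]
  refine ⟨fun r hr => (hu r hr).differentiableWithinAt, by simp, ?_⟩
  exact hv.congr fun r hr => (hu r hr).derivWithin (uniqueDiffOn_Ici r0 r hr)

lemma d1_eq_s15 {r0 r v : ℝ} {u : ℝ → ℝ} (hr : r0 ≤ r)
    (hu : HasDerivWithinAt u v (Set.Ici r0) r) : d1 r0 u r = v :=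
  hu.derivWithin (uniqueDiffOn_Ici r0 r hr)

lemma hasDerivWithinAt_d1 {r0 r : ℝ} {n : WithTop ℕ∞} (hn : n ≠ 0) {u : ℝ → ℝ}
    (hu : ContDiffOn ℝ n u (Set.Ici r0)) (hr : r0 ≤ r) :
    HasDerivWithinAt u (d1 r0 u r) (Set.Ici r0) r :=
  (hu.differentiableOn hn r hr).hasDerivWithinAt

lemma hasDerivAt_h {m0 r : ℝ} (hf : 0 < r * (r - 2*m0)) :
    HasDerivAt (fun s => √(s * (s - 2*m0))) ((r - m0) / √(r * (r - 2*m0))) r := by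
  have h1 : HasDerivAt (fun s : ℝ => s * (s - 2*m0)) (1 * (r - 2*m0) + r * 1) r :=
    (hasDerivAt_id r).mul ((hasDerivAt_id r).sub_const _)
  convert h1.sqrt hf.ne' using 1
  have := (Real.sqrt_pos.2 hf).ne'
  field_simp
  ring

/-- The homogeneous equation says `(h w)' = 0`, so zero initial data forces `w = 0`. -/
lemma homogeneous_eq_zero {m0 r0 : ℝ} (hm0 : 0 < m0) (hr0 : 2*m0 < r0) {w v : ℝ → ℝ}
    (hw : ∀ r, r0 ≤ r → HasDerivWithinAt w (v r) (Set.Ici r0) r) (hw0 : w r0 = 0)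
    (heq : ∀ r, r0 ≤ r → r*(r - 2*m0) * v r + (r - m0) * w r = 0) :
    ∀ r, r0 ≤ r → w r = 0 := by
  intro r hr
  have hf : ∀ s, r0 ≤ s → 0 < s * (s - 2*m0) := fun s hs =>
    mul_pos (by linarith) (by linarith)
  have hd : ∀ s, r0 ≤ s →
      HasDerivWithinAt (fun s => √(s * (s - 2*m0)) * w s) 0 (Set.Ici r0) s := by
    intro s hs
    refine ((hasDerivAt_h (hf s hs)).hasDerivWithinAt.mul (hw s hs)).congr_deriv ?_
    have h1 := Real.sqrt_pos.2 (hf s hs)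
    have h2 := Real.sq_sqrt (hf s hs).le
    have h3 := heq s hs
    rw [← h2] at h3
    change (s - m0) / √(s * (s - 2*m0)) * w s + √(s * (s - 2*m0)) * v s = 0
    generalize √(s * (s - 2*m0)) = H at h1 h3 ⊢
    field_simp
    linarith
  have := constant_of_has_deriv_right_zero (a := r0) (b := r)
    (f := fun s => √(s * (s - 2*m0)) * w s)
    (fun s hs => (hd s hs.1).continuousWithinAt.mono Set.Icc_subset_Ici_self)
    (fun s hs => (hd s hs.1).mono (Set.Ici_subset_Ici.2 hs.1)) r ⟨hr, le_rfl⟩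
  simp only [hw0, mul_zero] at this
  exact (mul_eq_zero.1 this).resolve_left (Real.sqrt_pos.2 (hf r hr)).ne'

lemma q_bound {m0 r0 r : ℝ} (hm0 : 0 < m0) (hr0 : 2*m0 < r0) (hr : r0 ≤ r) :
    (1 - 2*m0/r0) * r^2 ≤ r * (r - 2*m0) := by
  have h0 : 0 < r0 := by linarith
  have h1 : 2*m0 ≤ 2*m0/r0 * r := by
    rw [div_mul_eq_mul_div, le_div_iff₀ h0]
    nlinarith
  nlinarith

/-- The explicit solution `u = (h(r0) u0 + ∫_{r0}^r c/h) / h` of the inhomogeneous equation,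
together with its `O(1/r)` bound. -/
lemma exists_solution {m0 r0 δ C : ℝ} (hm0 : 0 < m0) (hr0 : 2*m0 < r0) (hδ : δ < 0)
    (hC : 0 ≤ C) {c : ℝ → ℝ}
    (hc : ContinuousOn c (Set.Ici r0)) (hcb : ∀ r, r0 ≤ r → |c r| ≤ C * r ^ δ) (u0 : ℝ) :
    ∃ (u : ℝ → ℝ) (K : ℝ), u r0 = u0 ∧
      (∀ r, r0 ≤ r → HasDerivWithinAt u ((c r - (r - m0) * u r) / (r * (r - 2*m0)))
        (Set.Ici r0) r) ∧
      ∀ r, r0 ≤ r → |u r| ≤ K / r := by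
  have h0 : 0 < r0 := by linarith
  have hf : ∀ s, r0 ≤ s → 0 < s * (s - 2*m0) := fun s hs =>
    mul_pos (by linarith) (by linarith)
  set h : ℝ → ℝ := fun s => √(s * (s - 2*m0)) with hh
  have hhpos : ∀ s, r0 ≤ s → 0 < h s := fun s hs => Real.sqrt_pos.2 (hf s hs)
  have hhsq : ∀ s, r0 ≤ s → h s ^ 2 = s * (s - 2*m0) := fun s hs => Real.sq_sqrt (hf s hs).le
  set q := 1 - 2*m0/r0 with hq
  have hqpos : 0 < q := by
    rw [hq, sub_pos, div_lt_one h0]; exact hr0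
  have hsq : 0 < √q := Real.sqrt_pos.2 hqpos
  have hhge : ∀ s, r0 ≤ s → √q * s ≤ h s := by
    intro s hs
    apply Real.le_sqrt_of_sq_le
    rw [mul_pow, Real.sq_sqrt hqpos.le]
    exact q_bound hm0 hr0 hs
  -- Freezing the integrand to the left of `r0` makes it continuous on the whole line.
  set k : ℝ → ℝ := fun s => c (max r0 s) / h (max r0 s) with hk
  have hkc : Continuous k := by
    have hm : Continuous fun s : ℝ => max r0 s := continuous_const.max continuous_id
    refine Continuous.div (hc.comp_continuous hm fun s => Set.mem_Ici.2 (le_max_left _ _)) ?_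
      fun s => (hhpos _ (le_max_left _ _)).ne'
    exact Real.continuous_sqrt.comp (hm.mul (hm.sub continuous_const))
  set P : ℝ → ℝ := fun r => h r0 * u0 + ∫ s in r0..r, k s with hP
  have hPd : ∀ r, HasDerivAt P (k r) r := fun r =>
    (intervalIntegral.integral_hasDerivAt_right (hkc.intervalIntegrable _ _)
      (hkc.stronglyMeasurableAtFilter _ _) hkc.continuousAt).const_add _
  set M := |h r0 * u0| + C / √q * (r0 ^ δ / (-δ)) with hM
  have hMnn : 0 ≤ M := by
    have : 0 < -δ := by linarith
    positivity
  have hPb : ∀ r, r0 ≤ r → |P r| ≤ M := by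
    intro r hr
    have hrpos : 0 < r := by linarith
    have hnot : (0:ℝ) ∉ Set.uIcc r0 r := by
      rw [Set.uIcc_of_le hr]; intro hx; linarith [hx.1]
    have hb : ‖∫ s in r0..r, k s‖ ≤ ∫ s in r0..r, C / √q * s ^ (δ - 1) := by
      apply intervalIntegral.norm_integral_le_of_norm_le hr
      · refine Filter.Eventually.of_forall fun s hs => ?_
        have hs' : r0 ≤ s := hs.1.le
        have hspos : 0 < s := by linarith
        simp only [hk, max_eq_right hs', Real.norm_eq_abs, abs_div, abs_of_pos (hhpos s hs')]
        calc |c s| / h s ≤ (C * s ^ δ) / (√q * s) := by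
              gcongr
              · exact hcb s hs'
              · exact hhge s hs'
          _ = C / √q * s ^ (δ - 1) := by
              rw [Real.rpow_sub_one hspos.ne']; field_simp
      · exact (intervalIntegral.intervalIntegrable_rpow (Or.inr hnot)).const_mul _
    rw [intervalIntegral.integral_const_mul, integral_rpow (Or.inr ⟨by linarith, hnot⟩)] at hb
    have hle : (r ^ (δ - 1 + 1) - r0 ^ (δ - 1 + 1)) / (δ - 1 + 1) ≤ r0 ^ δ / (-δ) := by
      rw [sub_add_cancel, ← neg_div_neg_eq]
      have h1 : 0 < -δ := by linarith
      have h2 : 0 < r ^ δ := by positivity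
      gcongr
      linarith
    have hle2 := hb.trans (mul_le_mul_of_nonneg_left hle (by positivity : 0 ≤ C / √q))
    exact (abs_add_le _ _).trans (add_le_add le_rfl hle2)
  refine ⟨fun r => P r / h r, M / √q, ?_, ?_, ?_⟩
  · simp only [hP, intervalIntegral.integral_same, add_zero]
    exact mul_div_cancel_left₀ _ (hhpos r0 le_rfl).ne'
  · intro r hr
    have hhr := hhpos r hr
    refine ((hPd r).div (hasDerivAt_h (hf r hr)) hhr.ne').hasDerivWithinAt.congr_deriv ?_
    change (k r * h r - P r * ((r - m0) / h r)) / h r ^ 2 = _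
    rw [← hhsq r hr]
    simp only [hk, max_eq_right hr]
    field_simp
  · intro r hr
    have hrpos : 0 < r := by linarith
    rw [abs_div, abs_of_pos (hhpos r hr), div_div]
    gcongr
    · exact hPb r hr
    · exact hhge r hr

/-- Dividing the right-hand side of the equation, or of its derivative, by `r(r-2m0)` gains
two powers of `r`. -/
lemma abs_div_le {m0 r0 r x K : ℝ} (hm0 : 0 < m0) (hr0 : 2*m0 < r0) (hr : r0 ≤ r)
    (hx : |x| ≤ K) : |x / (r * (r - 2*m0))| ≤ K / ((1 - 2*m0/r0) * r^2) := by
  have h0 : 0 < r0 := by linarith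
  have hrpos : 0 < r := by linarith
  have hqpos : 0 < 1 - 2*m0/r0 := by
    rw [sub_pos, div_lt_one h0]; exact hr0
  have hK : 0 ≤ K := (abs_nonneg x).trans hx
  have hf : 0 < r * (r - 2*m0) := mul_pos hrpos (by linarith)
  rw [abs_div, abs_of_pos hf]
  exact div_le_div₀ hK hx (by positivity) (q_bound hm0 hr0 hr)

/-- The equation and its derivative turn `u = O(1/r)` into `u' = O(1/r²)` and `u'' = O(1/r³)`. -/
lemma decay {m0 r0 δ C C' K : ℝ} (hm0 : 0 < m0) (hr0 : 2*m0 < r0) (hδ : δ < 0)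
    (hC : 0 ≤ C) (hC' : 0 ≤ C') {c c' u v w : ℝ → ℝ}
    (hcb : ∀ r, r0 ≤ r → |c r| ≤ C * r ^ δ) (hcb' : ∀ r, r0 ≤ r → |c' r| ≤ C' * r ^ (δ - 1))
    (hub : ∀ r, r0 ≤ r → |u r| ≤ K / r)
    (hv : ∀ r, r0 ≤ r → v r = (c r - (r - m0) * u r) / (r * (r - 2*m0)))
    (hw : ∀ r, r0 ≤ r → w r = (c' r - 3 * ((r - m0) * v r) - u r) / (r * (r - 2*m0))) :
    ∃ K₁ K₂, (∀ r, r0 ≤ r → |v r| ≤ K₁ / r^2) ∧ ∀ r, r0 ≤ r → |w r| ≤ K₂ / r^3 := by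
  have h0 : 0 < r0 := by linarith
  set q := 1 - 2*m0/r0 with hq
  have hqpos : 0 < q := by
    rw [hq, sub_pos, div_lt_one h0]; exact hr0
  have hpow : ∀ r, r0 ≤ r → r ^ δ ≤ r0 ^ δ := fun r hr =>
    Real.rpow_le_rpow_of_nonpos h0 hr hδ.le
  have hrm : ∀ r y, r0 ≤ r → |(r - m0) * y| ≤ r * |y| := by
    intro r y hr
    rw [abs_mul, abs_of_pos (by linarith : 0 < r - m0)]
    gcongr
    linarith
  have hvb : ∀ r, r0 ≤ r → |v r| ≤ ((C * r0 ^ δ + K) / q) / r^2 := by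
    intro r hr
    have hrpos : 0 < r := by linarith
    have h1 : |c r - (r - m0) * u r| ≤ C * r0 ^ δ + K := by
      have h2 : |(r - m0) * u r| ≤ K := (hrm r _ hr).trans <| by
        have := mul_le_mul_of_nonneg_left (hub r hr) hrpos.le
        rwa [mul_div_cancel₀ _ hrpos.ne'] at this
      have h3 : |c r| ≤ C * r0 ^ δ := (hcb r hr).trans (mul_le_mul_of_nonneg_left (hpow r hr) hC)
      exact (abs_sub _ _).trans (add_le_add h3 h2)
    rw [hv r hr, div_div]
    exact abs_div_le hm0 hr0 hr h1
  set K₁ := (C * r0 ^ δ + K) / q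
  refine ⟨K₁, (C' * r0 ^ δ + 3 * K₁ + K) / q, hvb, fun r hr => ?_⟩
  have hrpos : 0 < r := by linarith
  have h1 : |c' r - 3 * ((r - m0) * v r) - u r| ≤ (C' * r0 ^ δ + 3 * K₁ + K) / r := by
    have h2 : |(r - m0) * v r| ≤ K₁ / r := (hrm r _ hr).trans <| by
      have := mul_le_mul_of_nonneg_left (hvb r hr) hrpos.le
      refine this.trans_eq ?_
      field_simp
    have h3 : |c' r| ≤ C' * r0 ^ δ / r := (hcb' r hr).trans <| by
      rw [Real.rpow_sub_one hrpos.ne', ← mul_div_assoc]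
      exact div_le_div_of_nonneg_right (mul_le_mul_of_nonneg_left (hpow r hr) hC') hrpos.le
    have h4 : |3 * ((r - m0) * v r)| ≤ 3 * (K₁ / r) := by
      rw [abs_mul, abs_of_pos (by norm_num : (0:ℝ) < 3)]; gcongr
    calc _ ≤ |c' r| + |3 * ((r - m0) * v r)| + |u r| :=
          (abs_sub _ _).trans (add_le_add (abs_sub _ _) le_rfl)
      _ ≤ C' * r0 ^ δ / r + 3 * (K₁ / r) + K / r := add_le_add (add_le_add h3 h4) (hub r hr)
      _ = _ := by ring
  rw [hw r hr]
  refine (abs_div_le hm0 hr0 hr h1).trans_eq ?_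
  rw [← hq]
  field_simp

theorem stmt15 (m0 r0 δ : ℝ) (hm0 : 0 < m0) (hr0 : 2*m0 < r0)
    (hδ1 : -1 < δ) (hδ2 : δ < -(1/2))
    (l : ℤ) (hl : 1 ≤ l)
    (c : ℝ → ℝ) (hc : MemH2C2 r0 δ c)
    (hceq : ∀ r, r0 ≤ r →
      r*(r - 2*m0) * d2 r0 c r + 2*(r - m0) * d1 r0 c r
        - (l:ℝ)*((l:ℝ)+1) * c r = 0)
    (β : ℝ → ℝ) (hβ : MemH2C2 r0 δ β) (hβ0 : β r0 = 0)
    (a0 : ℝ) :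
    ∃ a : ℝ → ℝ,
      (ContDiffOn ℝ 1 a (Set.Ici r0) ∧ a r0 = a0 ∧
        (∀ r, r0 ≤ r →
          r*(r - 2*m0) * d1 r0 a r + (r - m0) * a r - c r
            = r*(r - 2*m0) * d1 r0 β r + (r - m0) * β r)) ∧
      (∀ a₂ : ℝ → ℝ,
        (ContDiffOn ℝ 1 a₂ (Set.Ici r0) ∧ a₂ r0 = a0 ∧
          (∀ r, r0 ≤ r →
            r*(r - 2*m0) * d1 r0 a₂ r + (r - m0) * a₂ r - c r
              = r*(r - 2*m0) * d1 r0 β r + (r - m0) * β r)) →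
        ∀ r, r0 ≤ r → a₂ r = a r) ∧
      MemH2C2 r0 δ a := by
  have h0 : 0 < r0 := by linarith
  have hδ : δ < 0 := by linarith
  have hf : ∀ s, r0 ≤ s → s * (s - 2*m0) ≠ 0 := fun s hs =>
    (mul_pos (by linarith) (by linarith : 0 < s - 2*m0)).ne'
  obtain ⟨hcC, -, -, -, hc0, hc1, -⟩ := hc
  obtain ⟨hβC, hβL0, hβL1, hβL2, hβ00, hβ01, hβ02⟩ := hβ
  obtain ⟨C, hC, hcb⟩ := exists_bound_of_wC0 h0 hc0
  obtain ⟨C', hC', hcb'⟩ := exists_bound_of_wC0 h0 hc1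
  obtain ⟨u, K, hu0, hud, hub⟩ :=
    exists_solution hm0 hr0 hδ hC hcC.continuousOn hcb a0
  set v : ℝ → ℝ := fun r => (c r - (r - m0) * u r) / (r * (r - 2*m0)) with hv
  have hcd : ∀ r, r0 ≤ r → HasDerivWithinAt c (d1 r0 c r) (Set.Ici r0) r := fun r hr =>
    hasDerivWithinAt_d1 (by norm_num) hcC hr
  have hcC1 : ContDiffOn ℝ 1 c (Set.Ici r0) := hcC.of_le (by norm_num)
  have hvC : ∀ n : ℕ, ContDiffOn ℝ n c (Set.Ici r0) → ContDiffOn ℝ n u (Set.Ici r0) →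
      ContDiffOn ℝ n v (Set.Ici r0) := fun n h1 h2 =>
    (h1.sub ((contDiffOn_id.sub contDiffOn_const).mul h2)).div
      (contDiffOn_id.mul (contDiffOn_id.sub contDiffOn_const)) hf
  have huc : ContDiffOn ℝ (0:ℕ) u (Set.Ici r0) := by
    exact contDiffOn_zero.2 fun r hr => (hud r hr).continuousWithinAt
  have huC1 : ContDiffOn ℝ (1:ℕ) u (Set.Ici r0) := by
    simpa using contDiffOn_succ_of_hasDerivWithinAt hud
      (hvC 0 (by simpa using hcC.continuousOn) huc)
  have hvC1 : ContDiffOn ℝ (1:ℕ) v (Set.Ici r0) := hvC 1 (by simpa using hcC1) huC1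
  have huC2 : ContDiffOn ℝ 2 u (Set.Ici r0) := by
    have := contDiffOn_succ_of_hasDerivWithinAt hud hvC1
    norm_num at this
    exact this
  set w : ℝ → ℝ := fun r => (d1 r0 c r - 3 * ((r - m0) * v r) - u r) / (r * (r - 2*m0)) with hw
  have hvd : ∀ r, r0 ≤ r → HasDerivWithinAt v (w r) (Set.Ici r0) r := by
    intro r hr
    have hid := hasDerivWithinAt_id r (Set.Ici r0)
    refine (((hcd r hr).sub ((hid.sub_const m0).mul (hud r hr))).div
      (hid.mul (hid.sub_const (2*m0))) (hf r hr)).congr_deriv ?_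
    have h1 : r * (r - 2*m0) * v r = c r - (r - m0) * u r := mul_div_cancel₀ _ (hf r hr)
    have h2 := hf r hr
    change ((d1 r0 c r - (1 * u r + (r - m0) * v r)) * (r * (r - 2*m0)) -
      (c r - (r - m0) * u r) * (1 * (r - 2*m0) + r * 1)) / (r * (r - 2*m0)) ^ 2 =
      (d1 r0 c r - 3 * ((r - m0) * v r) - u r) / (r * (r - 2*m0))
    rw [← h1, div_eq_div_iff (pow_ne_zero 2 h2) h2]
    ring
  obtain ⟨K₁, K₂, hvb, hwb⟩ := decay hm0 hr0 hδ hC hC' hcb hcb' hub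
    (fun _ _ => rfl) (fun _ _ => rfl) (v := v) (w := w)
  have hβd : ∀ r, r0 ≤ r → HasDerivWithinAt β (d1 r0 β r) (Set.Ici r0) r := fun r hr =>
    hasDerivWithinAt_d1 (by norm_num) hβC hr
  have hβC1 : ContDiffOn ℝ 1 (d1 r0 β) (Set.Ici r0) :=
    hβC.derivWithin (uniqueDiffOn_Ici r0) (by norm_num)
  have ha1 : ∀ r, r0 ≤ r → d1 r0 (fun s => β s + u s) r = d1 r0 β r + v r := fun r hr =>
    d1_eq_s15 hr ((hβd r hr).add (hud r hr))
  have ha2 : ∀ r, r0 ≤ r → d2 r0 (fun s => β s + u s) r = d2 r0 β r + w r := fun r hr =>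
    d1_eq_s15 hr (((hasDerivWithinAt_d1 (by norm_num) hβC1 hr).add (hvd r hr)).congr ha1 (ha1 r hr))
  have haC : ContDiffOn ℝ 2 (fun s => β s + u s) (Set.Ici r0) := hβC.add huC2
  have haeq : ∀ r, r0 ≤ r → r*(r - 2*m0) * d1 r0 (fun s => β s + u s) r
      + (r - m0) * (β r + u r) - c r = r*(r - 2*m0) * d1 r0 β r + (r - m0) * β r := by
    intro r hr
    have h1 : r * (r - 2*m0) * v r = c r - (r - m0) * u r := mul_div_cancel₀ _ (hf r hr)
    rw [ha1 r hr]
    linarith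
  have e0 : ∀ r, r0 ≤ r → |(β r + u r) - β r| ≤ K * r ^ (-1:ℝ) := by
    intro r hr
    rw [add_sub_cancel_left, Real.rpow_neg_one, ← div_eq_mul_inv]
    exact hub r hr
  have e1 : ∀ r, r0 ≤ r → |d1 r0 (fun s => β s + u s) r - d1 r0 β r| ≤ K₁ * r ^ (-2:ℝ) := by
    intro r hr
    rw [ha1 r hr, add_sub_cancel_left, Real.rpow_neg (by linarith), ← div_eq_mul_inv]
    exact_mod_cast hvb r hr
  have e2 : ∀ r, r0 ≤ r → |d2 r0 (fun s => β s + u s) r - d2 r0 β r| ≤ K₂ * r ^ (-3:ℝ) := by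
    intro r hr
    rw [ha2 r hr, add_sub_cancel_left, Real.rpow_neg (by linarith), ← div_eq_mul_inv]
    exact_mod_cast hwb r hr
  refine ⟨fun s => β s + u s, ⟨haC.of_le (by norm_num), by simp [hβ0, hu0], haeq⟩, ?_, haC,
    wL2_ne_top_of_close h0 (by linarith) hβL0 e0, wL2_ne_top_of_close h0 (by linarith) hβL1 e1,
    wL2_ne_top_of_close h0 (by linarith) hβL2 e2, wC0_ne_top_of_close h0 (by linarith) hβ00 e0,
    wC0_ne_top_of_close h0 (by linarith) hβ01 e1, wC0_ne_top_of_close h0 (by linarith) hβ02 e2⟩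
  rintro a₂ ⟨ha₂C, ha₂0, ha₂eq⟩ r hr
  refine sub_eq_zero.1 (homogeneous_eq_zero hm0 hr0 (w := fun s => a₂ s - (β s + u s))
    (fun s hs => (hasDerivWithinAt_d1 (by norm_num) ha₂C hs).sub
      (hasDerivWithinAt_d1 (by norm_num) haC hs)) (by simp [ha₂0, hβ0, hu0]) ?_ r hr)
  intro s hs
  have h1 := ha₂eq s hs
  have h2 := haeq s hs
  linear_combination h1 - h2
end
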